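/- For any real a > 1 and integer b ≥ 0, the sum Σ_{n > x} Λ(n)² n^{-a} (log(x/n))^b equals ((-1)^b b! · x^{1-a} · log x)/(a-1)^{b+1} · (1 + O(1/log x)) as x → ∞, where the implied constant depends only on a and b. -/

import Mathlib

open Real ArithmeticFunction Filter
open MeasureTheory

/-!
On `1 < Re s ≤ 2` the Dirichlet series of `(Λ - 1) log ^ k` is, up to sign, the `k`-th derivative of
`(log ((s - 1) ζ(s)))' + (ζ(s) - 1 / (s - 1))`. The inequality `ζ(σ)³ |ζ(σ + it)⁴ ζ(σ + 2it)| ≥ 1`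
and Euler–Maclaurin bounds for `(s - 1) ζ(s)` show that it is `O((1 + |t|) ^ ε)` for every `ε > 0`,
uniformly up to the line `Re s = 1`. A Perron integral with kernel `1 / (s (s + 1))` then gives
`∑_{n ≤ x} (Λ n - 1) log² n (x - n) = O(x²)`.

The factor `log²` is what makes this `O(x²)` strong enough: the terms are at least `-log² x`, so the
weight `x - n` can be removed by comparing Riesz means at distance `x / log x`, with an error of
`O(x log x)`. Dividing one logarithm out again leaves `∑_{n ≤ x} (Λ n - 1) log n = O(x)`. Since
`Λ n = log n` on primes and the higher prime powers contribute `O(x)`, it follows that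
`∑_{n ≤ x} Λ(n)² = x log x + O(x)`, from which partial summation gives the tail.
-/

lemma norm_ofReal_cpow_neg_sub_le {n : ℝ} (hn : 0 < n) {s : ℂ} (hs : 0 ≤ s.re) {u v : ℝ}
    (hu : n ≤ u) (hv : n ≤ v) :
    ‖(v : ℂ) ^ (-s) - (u : ℂ) ^ (-s)‖ ≤ ‖s‖ * n ^ (-s.re - 1) * |v - u| := by
  refine (convex_Ici n).norm_image_sub_le_of_norm_hasDerivWithin_le
    (f := fun w : ℝ => (w : ℂ) ^ (-s)) (f' := fun w => -s * (w : ℂ) ^ (-s - 1))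
    (fun w hw => ?_) (fun w hw => ?_) hu hv
  · simpa using ((hasDerivAt_id (w : ℂ)).cpow_const (c := -s)
      (by left; simpa using hn.trans_le hw)).comp_ofReal.hasDerivWithinAt
  · rw [norm_mul, norm_neg, Complex.norm_cpow_eq_rpow_re_of_pos (hn.trans_le hw),
      Complex.sub_re, Complex.neg_re, Complex.one_re]
    gcongr ‖s‖ * ?_
    exact Real.rpow_le_rpow_of_nonpos hn hw (by linarith)

/-- The first-order Euler–Maclaurin truncation `(s - 1) ∑_{n ≤ N} n ^ (-s) + N ^ (1 - s)` of
`(s - 1) ζ(s)`. The sum is indexed from `0`, so that the base of every power is nonzero. -/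
noncomputable def riemannZeta₁Trunc (N : ℕ) (s : ℂ) : ℂ :=
  (s - 1) * ∑ n ∈ Finset.range N, ((n : ℂ) + 1) ^ (-s) + (N : ℂ) ^ (1 - s)

lemma differentiable_riemannZeta₁Trunc {N : ℕ} (hN : 0 < N) :
    Differentiable ℂ (riemannZeta₁Trunc N) := by
  intro s
  refine DifferentiableAt.add (DifferentiableAt.mul (by fun_prop)
    (DifferentiableAt.fun_sum fun n _ => ?_)) ?_
  · exact DifferentiableAt.const_cpow (by fun_prop) (Or.inl n.cast_add_one_ne_zero)
  · exact DifferentiableAt.const_cpow (by fun_prop) (Or.inl (Nat.cast_ne_zero.mpr hN.ne'))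

lemma norm_riemannZeta₁Trunc_succ_sub_le {N : ℕ} (hN : 0 < N) {s : ℂ} (hs : 0 ≤ s.re) :
    ‖riemannZeta₁Trunc (N + 1) s - riemannZeta₁Trunc N s‖ ≤
      ‖s - 1‖ * ‖s‖ * (N : ℝ) ^ (-s.re - 1) := by
  have hN' : (0 : ℝ) < N := Nat.cast_pos.mpr hN
  have hderiv : ∀ w ∈ Set.Icc (N : ℝ) (N + 1), HasDerivWithinAt
      (fun w : ℝ => (s - 1) * (((N + 1 : ℝ) : ℂ)) ^ (-s) * (w : ℂ) + (w : ℂ) ^ (1 - s))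
      ((s - 1) * ((((N + 1 : ℝ) : ℂ)) ^ (-s) - (w : ℂ) ^ (-s))) (Set.Icc (N : ℝ) (N + 1)) w := by
    intro w hw
    have hpow := (hasDerivAt_id (w : ℂ)).cpow_const (c := 1 - s)
      (by left; simpa using hN'.trans_le hw.1)
    have hlin := (hasDerivAt_id (w : ℂ)).const_mul ((s - 1) * (((N + 1 : ℝ) : ℂ)) ^ (-s))
    convert! (hlin.add hpow).comp_ofReal.hasDerivWithinAt (s := Set.Icc (N : ℝ) (N + 1)) using 1
    rw [id, mul_one, show 1 - s - 1 = -s by ring]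
    ring
  have hbound : ∀ w ∈ Set.Icc (N : ℝ) (N + 1),
      ‖(s - 1) * ((((N + 1 : ℝ) : ℂ)) ^ (-s) - (w : ℂ) ^ (-s))‖ ≤
        ‖s - 1‖ * ‖s‖ * (N : ℝ) ^ (-s.re - 1) := by
    intro w hw
    rw [norm_mul, mul_assoc]
    gcongr
    refine (norm_ofReal_cpow_neg_sub_le hN' hs hw.1 (by simp)).trans ?_
    refine mul_le_of_le_one_right (by positivity) (abs_le.mpr ⟨?_, ?_⟩) <;> linarith [hw.1, hw.2]
  have hmean := (convex_Icc (N : ℝ) (N + 1)).norm_image_sub_le_of_norm_hasDerivWithin_le hderiv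
    hbound (x := (N : ℝ)) (y := (N : ℝ) + 1) (by simp) (by simp)
  rw [add_sub_cancel_left, norm_one, mul_one] at hmean
  refine le_of_eq_of_le (congrArg norm ?_) hmean
  rw [riemannZeta₁Trunc, riemannZeta₁Trunc, Finset.sum_range_succ]
  push_cast
  ring

lemma summable_nat_add_rpow_neg_sub_one (N : ℕ) {σ : ℝ} (hσ : 0 < σ) :
    Summable fun n : ℕ => ((n + N : ℕ) : ℝ) ^ (-σ - 1) :=
  (summable_nat_add_iff N).mpr (Real.summable_nat_rpow.mpr (by linarith))

lemma tendsto_riemannZeta₁Trunc_of_one_lt_re {s : ℂ} (hs : 1 < s.re) :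
    Tendsto (fun N => riemannZeta₁Trunc N s) atTop (nhds (riemannZeta₁ s)) := by
  have hs1 : s ≠ 1 := by rintro rfl; simp at hs
  have hsum : Tendsto (fun N : ℕ => ∑ n ∈ Finset.range N, ((n : ℂ) + 1) ^ (-s)) atTop
      (nhds (riemannZeta s)) := by
    have hsummable : Summable fun n : ℕ => 1 / ((n : ℂ) + 1) ^ s := by
      simpa using (summable_nat_add_iff 1).mpr (Complex.summable_one_div_nat_cpow.mpr hs)
    simpa only [zeta_eq_tsum_one_div_nat_add_one_cpow hs, Complex.cpow_neg, one_div] using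
      hsummable.hasSum.tendsto_sum_nat
  have hpow : Tendsto (fun N : ℕ => (N : ℂ) ^ (1 - s)) atTop (nhds 0) := by
    refine tendsto_zero_iff_norm_tendsto_zero.mpr (((tendsto_rpow_neg_atTop
      (sub_pos.mpr hs)).comp tendsto_natCast_atTop_atTop).congr' ?_)
    filter_upwards [eventually_gt_atTop 0] with N hN
    rw [Complex.norm_natCast_cpow_of_pos hN, Complex.sub_re, Complex.one_re, neg_sub,
      Function.comp_apply]
  have hlim := (hsum.const_mul (s - 1)).add hpow
  rwa [riemannZeta_eq_inv_sub_mul hs1, mul_inv_cancel_left₀ (sub_ne_zero.mpr hs1), add_zero]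
    at hlim

lemma differentiableOn_tsum_riemannZeta₁Trunc_sub {N : ℕ} (hN : 0 < N) :
    DifferentiableOn ℂ (fun s => ∑' n : ℕ,
      (riemannZeta₁Trunc (n + N + 1) s - riemannZeta₁Trunc (n + N) s)) {s | 0 < s.re} := by
  intro z (hz : 0 < z.re)
  set V : Set ℂ := {w | z.re / 2 < w.re} ∩ Metric.ball 0 (‖z‖ + 1)
  have hV : IsOpen V := (isOpen_lt continuous_const Complex.continuous_re).inter Metric.isOpen_ball
  have hzV : z ∈ V := ⟨half_lt_self hz, by simp⟩
  refine ((Complex.differentiableOn_tsum_of_summable_norm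
    (u := fun n : ℕ => (‖z‖ + 1 + 1) * (‖z‖ + 1) * ((n + N : ℕ) : ℝ) ^ (-(z.re / 2) - 1))
    ((summable_nat_add_rpow_neg_sub_one N (half_pos hz)).mul_left _)
    (fun n => ((differentiable_riemannZeta₁Trunc (by lia)).sub
      (differentiable_riemannZeta₁Trunc (by lia))).differentiableOn) hV ?_).differentiableAt
    (hV.mem_nhds hzV)).differentiableWithinAt
  rintro n w ⟨hw_re : z.re / 2 < w.re, hw_ball⟩
  have hw_norm : ‖w‖ < ‖z‖ + 1 := by simpa using hw_ball
  refine (norm_riemannZeta₁Trunc_succ_sub_le (by lia) (by linarith)).trans ?_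
  gcongr
  · exact (norm_sub_le _ _).trans (by rw [norm_one]; linarith)
  · exact Nat.one_le_cast.mpr (by lia)

lemma riemannZeta₁_eq_trunc_add_tsum {N : ℕ} (hN : 0 < N) {s : ℂ} (hs : 0 < s.re) :
    riemannZeta₁ s = riemannZeta₁Trunc N s +
      ∑' n : ℕ, (riemannZeta₁Trunc (n + N + 1) s - riemannZeta₁Trunc (n + N) s) := by
  have hopen (c : ℝ) : IsOpen {s : ℂ | c < s.re} := isOpen_lt continuous_const Complex.continuous_re
  refine AnalyticOnNhd.eqOn_of_preconnected_of_eventuallyEq (z₀ := 2)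
    (differentiable_riemannZeta₁.differentiableOn.analyticOnNhd (hopen 0))
    (((differentiable_riemannZeta₁Trunc hN).differentiableOn.add
      (differentiableOn_tsum_riemannZeta₁Trunc_sub hN)).analyticOnNhd (hopen 0))
    (convex_halfSpace_re_gt 0).isPreconnected (by simp) ?_ hs
  filter_upwards [(hopen 1).mem_nhds (show (2 : ℂ) ∈ {s : ℂ | 1 < s.re} by simp)]
    with w (hw : 1 < w.re)
  have hsummable : Summable fun n : ℕ =>
      riemannZeta₁Trunc (n + N + 1) w - riemannZeta₁Trunc (n + N) w :=
    .of_norm_bounded ((summable_nat_add_rpow_neg_sub_one N (zero_lt_one.trans hw)).mul_left _)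
      fun n => norm_riemannZeta₁Trunc_succ_sub_le (by lia) (by linarith)
  have htelescope (M : ℕ) : ∑ n ∈ Finset.range M,
      (riemannZeta₁Trunc (n + N + 1) w - riemannZeta₁Trunc (n + N) w) =
        riemannZeta₁Trunc (M + N) w - riemannZeta₁Trunc N w := by
    simpa only [add_right_comm, zero_add] using
      Finset.sum_range_sub (fun n => riemannZeta₁Trunc (n + N) w) M
  have hlim := hsummable.hasSum.tendsto_sum_nat
  simp_rw [htelescope] at hlim
  rw [Pi.add_apply, tendsto_nhds_unique hlim (((tendsto_riemannZeta₁Trunc_of_one_lt_re hw).comp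
    (tendsto_add_atTop_nat N)).sub_const _), add_sub_cancel]

lemma norm_riemannZeta₁_sub_trunc_le {N : ℕ} (hN : 0 < N) {s : ℂ} (hs : 0 < s.re) :
    ‖riemannZeta₁ s - riemannZeta₁Trunc N s‖ ≤
      ‖s - 1‖ * ‖s‖ * ∑' n : ℕ, ((n + N : ℕ) : ℝ) ^ (-s.re - 1) := by
  rw [riemannZeta₁_eq_trunc_add_tsum hN hs, add_sub_cancel_left]
  exact tsum_of_norm_bounded ((summable_nat_add_rpow_neg_sub_one N hs).hasSum.mul_left _)
    fun n => norm_riemannZeta₁Trunc_succ_sub_le (by lia) hs.le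

lemma norm_sum_range_cpow_neg_le (N : ℕ) {p α : ℝ} (hp : 1 < p) (hα : 0 ≤ α) {s : ℂ}
    (hs : p ≤ s.re + α) :
    ‖∑ n ∈ Finset.range N, ((n : ℂ) + 1) ^ (-s)‖ ≤
      (N : ℝ) ^ α * ∑' n : ℕ, ((n + 1 : ℕ) : ℝ) ^ (-p) := by
  have hsum : Summable fun n : ℕ => ((n + 1 : ℕ) : ℝ) ^ (-p) :=
    (summable_nat_add_iff 1).mpr (Real.summable_nat_rpow.mpr (by linarith))
  calc ‖∑ n ∈ Finset.range N, ((n : ℂ) + 1) ^ (-s)‖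
      ≤ ∑ n ∈ Finset.range N, (N : ℝ) ^ α * ((n + 1 : ℕ) : ℝ) ^ (-p) := by
        refine norm_sum_le_of_le _ fun n hn => ?_
        rw [← Nat.cast_succ, Complex.norm_natCast_cpow_of_pos n.succ_pos, Complex.neg_re]
        calc ((n + 1 : ℕ) : ℝ) ^ (-s.re) ≤ ((n + 1 : ℕ) : ℝ) ^ (α + -p) :=
              Real.rpow_le_rpow_of_exponent_le (by simp) (by linarith)
          _ = ((n + 1 : ℕ) : ℝ) ^ α * ((n + 1 : ℕ) : ℝ) ^ (-p) :=
              Real.rpow_add (by positivity) _ _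
          _ ≤ (N : ℝ) ^ α * ((n + 1 : ℕ) : ℝ) ^ (-p) := by
              have : n + 1 ≤ N := Finset.mem_range.mp hn
              gcongr
    _ ≤ (N : ℝ) ^ α * ∑' n : ℕ, ((n + 1 : ℕ) : ℝ) ^ (-p) := by
        rw [← Finset.mul_sum]
        gcongr
        exact hsum.sum_le_tsum _ fun n _ => by positivity

lemma tsum_nat_add_rpow_neg_le {N : ℕ} (hN : 0 < N) {p β q : ℝ} (hp : 1 < p) (hβ : 0 ≤ β)
    (hq : p + β ≤ q) :
    ∑' n : ℕ, ((n + N : ℕ) : ℝ) ^ (-q) ≤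
      (N : ℝ) ^ (-β) * ∑' n : ℕ, ((n + 1 : ℕ) : ℝ) ^ (-p) := by
  have hN' : (0 : ℝ) < N := Nat.cast_pos.mpr hN
  have hsum (M : ℕ) {r : ℝ} (hr : 1 < r) : Summable fun n : ℕ => ((n + M : ℕ) : ℝ) ^ (-r) :=
    (summable_nat_add_iff M).mpr (Real.summable_nat_rpow.mpr (by linarith))
  rw [← tsum_mul_left]
  refine (hsum N (by linarith)).tsum_le_tsum (fun n => ?_) ((hsum 1 hp).mul_left _)
  have hle : (N : ℝ) ≤ (n + N : ℕ) := Nat.cast_le.mpr (Nat.le_add_left N n)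
  calc ((n + N : ℕ) : ℝ) ^ (-q) ≤ ((n + N : ℕ) : ℝ) ^ (-β + -p) :=
        Real.rpow_le_rpow_of_exponent_le (Nat.one_le_cast.mpr (by lia)) (by linarith)
    _ = ((n + N : ℕ) : ℝ) ^ (-β) * ((n + N : ℕ) : ℝ) ^ (-p) :=
        Real.rpow_add (hN'.trans_le hle) _ _
    _ ≤ (N : ℝ) ^ (-β) * ((n + 1 : ℕ) : ℝ) ^ (-p) :=
        mul_le_mul (Real.rpow_le_rpow_of_nonpos hN' hle (by linarith))
          (Real.rpow_le_rpow_of_nonpos (by positivity) (Nat.cast_le.mpr (by lia)) (by linarith))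
          (by positivity) (by positivity)

lemma norm_riemannZeta₁_le {N : ℕ} (hN : 0 < N) {ε : ℝ} (hε : 0 < ε) (hε1 : ε ≤ 1) {s : ℂ}
    (hs : 1 - ε / 4 ≤ s.re) :
    ‖riemannZeta₁ s‖ ≤
      (N : ℝ) ^ (ε / 2) * (‖s - 1‖ * ∑' n : ℕ, ((n + 1 : ℕ) : ℝ) ^ (-(1 + ε / 4)) + 1) +
        ‖s - 1‖ * ‖s‖ *
          ((N : ℝ) ^ (-(1 / 2) : ℝ) * ∑' n : ℕ, ((n + 1 : ℕ) : ℝ) ^ (-(5 / 4) : ℝ)) := by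
  have hsum : ‖(s - 1) * ∑ n ∈ Finset.range N, ((n : ℂ) + 1) ^ (-s)‖ ≤
      ‖s - 1‖ * ((N : ℝ) ^ (ε / 2) * ∑' n : ℕ, ((n + 1 : ℕ) : ℝ) ^ (-(1 + ε / 4))) := by
    rw [norm_mul]
    gcongr
    exact norm_sum_range_cpow_neg_le N (by linarith) (by linarith) (by linarith)
  have hpow : ‖(N : ℂ) ^ (1 - s)‖ ≤ (N : ℝ) ^ (ε / 2) := by
    rw [Complex.norm_natCast_cpow_of_pos hN, Complex.sub_re, Complex.one_re]
    exact Real.rpow_le_rpow_of_exponent_le (Nat.one_le_cast.mpr hN) (by linarith)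
  have htail := norm_riemannZeta₁_sub_trunc_le hN (s := s) (by linarith)
  rw [← neg_add'] at htail
  grw [tsum_nat_add_rpow_neg_le hN (p := 5 / 4) (β := 1 / 2) (by norm_num) (by norm_num)
    (by linarith)] at htail
  calc ‖riemannZeta₁ s‖ ≤ ‖riemannZeta₁Trunc N s‖ + ‖riemannZeta₁ s - riemannZeta₁Trunc N s‖ :=
        norm_le_norm_add_norm_sub' _ _
    _ ≤ _ := add_le_add ((norm_add_le _ _).trans (add_le_add hsum hpow)) htail
    _ = _ := by ring

lemma natCast_ceil_sq_rpow_half_le {T ε : ℝ} (hT : 1 ≤ T) (hε : 0 ≤ ε) (hε2 : ε ≤ 2) :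
    (⌈T ^ 2⌉₊ : ℝ) ^ (ε / 2) ≤ 2 * T ^ ε := by
  have hceil : (⌈T ^ 2⌉₊ : ℝ) ≤ 2 * T ^ 2 := by
    linarith [(Nat.ceil_lt_add_one (by positivity : 0 ≤ T ^ 2)).le, one_le_pow₀ hT (n := 2)]
  calc (⌈T ^ 2⌉₊ : ℝ) ^ (ε / 2) ≤ (2 * T ^ 2) ^ (ε / 2) := by gcongr
    _ = 2 ^ (ε / 2) * T ^ ε := by
      rw [Real.mul_rpow zero_le_two (by positivity), ← Real.rpow_natCast_mul (by positivity),
        Nat.cast_ofNat, mul_div_cancel₀ _ two_ne_zero]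
    _ ≤ 2 * T ^ ε := by
      gcongr
      exact Real.rpow_le_self_of_one_le one_le_two (by linarith)

lemma exists_norm_riemannZeta₁_le_rpow {ε : ℝ} (hε : 0 < ε) (hε1 : ε ≤ 1) :
    ∃ K : ℝ, 0 < K ∧ ∀ s : ℂ, 1 - ε / 4 ≤ s.re → s.re ≤ 3 →
      ‖riemannZeta₁ s‖ ≤ K * (1 + |s.im|) ^ (1 + ε) := by
  set c₁ : ℝ := ∑' n : ℕ, ((n + 1 : ℕ) : ℝ) ^ (-(1 + ε / 4))
  set c₂ : ℝ := ∑' n : ℕ, ((n + 1 : ℕ) : ℝ) ^ (-(5 / 4) : ℝ)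
  have hc₁ : 0 ≤ c₁ := tsum_nonneg fun n => by positivity
  have hc₂ : 0 ≤ c₂ := tsum_nonneg fun n => by positivity
  refine ⟨2 * (2 * c₁ + 1) + 6 * c₂, by positivity, fun s hs hs3 => ?_⟩
  set T : ℝ := 1 + |s.im|
  have hT : 1 ≤ T := le_add_of_nonneg_right (abs_nonneg _)
  have hnorm : ‖s‖ ≤ 3 * T := by
    linarith [Complex.norm_le_abs_re_add_abs_im s, abs_of_nonneg (by linarith : 0 ≤ s.re)]
  have hnorm_sub : ‖s - 1‖ ≤ 2 * T := by
    have h := Complex.norm_le_abs_re_add_abs_im (s - 1)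
    rw [Complex.sub_re, Complex.sub_im, Complex.one_re, Complex.one_im, sub_zero] at h
    linarith [abs_le.mpr (⟨by linarith, by linarith⟩ : -2 ≤ s.re - 1 ∧ s.re - 1 ≤ 2)]
  set N : ℕ := ⌈T ^ 2⌉₊
  have hN : 0 < N := Nat.ceil_pos.mpr (by positivity)
  have hpow : (N : ℝ) ^ (ε / 2) ≤ 2 * T ^ ε := natCast_ceil_sq_rpow_half_le hT hε.le (by linarith)
  have hpow_neg : (N : ℝ) ^ (-(1 / 2) : ℝ) ≤ T⁻¹ := by
    rw [Real.rpow_neg (Nat.cast_nonneg _), ← Real.sqrt_eq_rpow]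
    gcongr
    exact Real.le_sqrt_of_sq_le (Nat.le_ceil _)
  calc ‖riemannZeta₁ s‖ ≤ 2 * T ^ ε * (2 * T * c₁ + 1) + 2 * T * (3 * T) * (T⁻¹ * c₂) := by
        refine (norm_riemannZeta₁_le hN hε hε1 hs).trans ?_
        gcongr
    _ = 2 * (2 * T * c₁ + 1) * T ^ ε + 6 * T * c₂ * 1 := by field_simp; ring
    _ ≤ 2 * (2 * T * c₁ + T) * T ^ ε + 6 * T * c₂ * T ^ ε := by
        gcongr
        exact Real.one_le_rpow hT hε.le
    _ = (2 * (2 * c₁ + 1) + 6 * c₂) * T ^ (1 + ε) := by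
        rw [Real.rpow_add (by positivity), Real.rpow_one]
        ring

lemma re_im_of_mem_closedBall {s z : ℂ} {r : ℝ} (hz : z ∈ Metric.closedBall s r) :
    s.re - r ≤ z.re ∧ z.re ≤ s.re + r ∧ |z.im| ≤ |s.im| + r := by
  have hdist : ‖z - s‖ ≤ r := mem_closedBall_iff_norm.mp hz
  have hre := abs_le.mp ((Complex.abs_re_le_norm (z - s)).trans hdist)
  have him := (Complex.abs_im_le_norm (z - s)).trans hdist
  rw [Complex.sub_re] at hre
  rw [Complex.sub_im] at him
  exact ⟨by linarith, by linarith, by linarith [abs_sub_abs_le_abs_sub z.im s.im]⟩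

lemma norm_iteratedDeriv_le_of_norm_le_rpow_of_mem_strip {f : ℂ → ℂ} (hf : Differentiable ℂ f)
    {a b K κ r : ℝ} (hK : 0 ≤ K) (hκ : 0 ≤ κ) (hr : 0 < r) (hr1 : r ≤ 1)
    (hbound : ∀ z : ℂ, a ≤ z.re → z.re ≤ b → ‖f z‖ ≤ K * (1 + |z.im|) ^ κ) (k : ℕ) {s : ℂ}
    (ha : a + r ≤ s.re) (hb : s.re + r ≤ b) :
    ‖iteratedDeriv k f s‖ ≤ k.factorial * (K * 2 ^ κ * (1 + |s.im|) ^ κ) / r ^ k := by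
  refine Complex.norm_iteratedDeriv_le_of_forall_mem_sphere_norm_le k hr hf.diffContOnCl
    fun z hz => ?_
  obtain ⟨hre_lower, hre_upper, him⟩ := re_im_of_mem_closedBall (Metric.sphere_subset_closedBall hz)
  refine (hbound z (by linarith) (by linarith)).trans ?_
  rw [mul_assoc, ← Real.mul_rpow zero_le_two (by positivity)]
  gcongr
  linarith [abs_nonneg s.im]

lemma riemannZeta₁_ne_zero_of_one_le_re {s : ℂ} (hs : 1 ≤ s.re) : riemannZeta₁ s ≠ 0 := by
  rcases eq_or_ne s 1 with rfl | hs1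
  · simp
  · have h := riemannZeta_ne_zero_of_one_le_re hs
    rw [riemannZeta_eq_inv_sub_mul hs1] at h
    exact right_ne_zero_of_mul h

lemma one_le_norm_riemannZeta_product {δ : ℝ} (hδ : 0 < δ) (t : ℝ) :
    1 ≤ ‖riemannZeta (1 + δ)‖ ^ 3 * ‖riemannZeta (1 + δ + Complex.I * t)‖ ^ 4 *
      ‖riemannZeta (1 + δ + 2 * Complex.I * t)‖ := by
  have h := DirichletCharacter.norm_LSeries_product_ge_one (1 : DirichletCharacter ℂ 1) hδ t
  rw [one_pow, DirichletCharacter.modOne_eq_one] at h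
  rwa [LSeries_one_eq_riemannZeta (by simpa), LSeries_one_eq_riemannZeta (by simpa),
    LSeries_one_eq_riemannZeta (by simpa), norm_mul, norm_mul, norm_pow, norm_pow] at h

lemma norm_riemannZeta_one_add_add_I_mul_le {δ u v : ℝ} (hv : 0 < v) (huv : v ≤ max |δ| |u|) :
    ‖riemannZeta (1 + δ + Complex.I * u)‖ ≤ ‖riemannZeta₁ (1 + δ + Complex.I * u)‖ / v := by
  have hnorm : v ≤ ‖(δ + Complex.I * u : ℂ)‖ := by
    refine huv.trans (max_le ?_ ?_)
    · simpa using Complex.abs_re_le_norm (δ + Complex.I * u)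
    · simpa using Complex.abs_im_le_norm (δ + Complex.I * u)
  have hne : (δ + Complex.I * u : ℂ) ≠ 0 := norm_pos_iff.mp (hv.trans_le hnorm)
  rw [add_assoc, riemannZeta_eq_inv_sub_mul (by simpa using hne), add_sub_cancel_left, norm_mul,
    norm_inv, inv_mul_eq_div]
  gcongr

-- The optimal `δ` is of order `Z ^ (-5)`; below it the Lipschitz bound takes over.
lemma one_div_le_of_cube_le_mul_pow_four {y : ℝ → ℝ} {Z : ℝ} (hZ : 1 ≤ Z) (hy : ∀ δ, 0 ≤ y δ)
    (hlow : ∀ δ ∈ Set.Ioc (0 : ℝ) 1, δ ^ 3 ≤ Z * y δ ^ 4)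
    (hlip : ∀ δ ∈ Set.Ioc (0 : ℝ) 1, ∀ δ' ∈ Set.Ioc (0 : ℝ) 1, |y δ - y δ'| ≤ Z * |δ - δ'|)
    {δ : ℝ} (hδ : δ ∈ Set.Ioc (0 : ℝ) 1) : 1 / (16 * Z ^ 4) ≤ y δ := by
  have hZ0 : 0 < Z := zero_lt_one.trans_le hZ
  set η : ℝ := 1 / (16 * Z ^ 5) with hη
  have hη0 : 0 < η := by positivity
  have hη1 : η ≤ 1 := by
    rw [hη, div_le_one (by positivity)]
    linarith [one_le_pow₀ hZ (n := 5)]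
  have hlarge : ∀ δ, η ≤ δ → δ ≤ 1 → 1 / (8 * Z ^ 4) ≤ y δ := by
    intro δ hδ hδ1
    refine le_of_pow_le_pow_left₀ four_ne_zero (hy δ) ?_
    refine le_of_mul_le_mul_left (le_trans ?_ (hlow δ ⟨hη0.trans_le hδ, hδ1⟩)) hZ0
    calc Z * (1 / (8 * Z ^ 4)) ^ 4 = η ^ 3 := by rw [hη]; field_simp; norm_num
      _ ≤ δ ^ 3 := by gcongr
  have hhalf : 1 / (8 * Z ^ 4) = 1 / (16 * Z ^ 4) + Z * η := by rw [hη]; field_simp; norm_num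
  rcases le_total η δ with h | h
  · linarith [hlarge δ h hδ.2, mul_pos hZ0 hη0]
  · have hdist := (abs_le.mp (hlip η ⟨hη0, hη1⟩ δ hδ)).2
    rw [abs_of_nonneg (sub_nonneg.mpr h)] at hdist
    linarith [hlarge η le_rfl hη1, mul_pos hZ0 hδ.1]

lemma norm_riemannZeta_one_add_add_two_I_mul_le {ε K δ t : ℝ} (hε : 0 ≤ ε) (hε1 : ε ≤ 1)
    (hbound : ∀ u : ℝ, ‖riemannZeta₁ (1 + δ + Complex.I * u)‖ ≤ K * (1 + |u|) ^ (1 + ε))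
    (ht : 1 ≤ |t|) :
    ‖riemannZeta (1 + δ + 2 * Complex.I * t)‖ ≤ 4 * K * (1 + |t|) ^ ε := by
  have hK0 : 0 ≤ K := nonneg_of_mul_nonneg_left ((norm_nonneg _).trans (hbound 0)) (by positivity)
  have hT : 0 < 1 + |t| := by positivity
  have habs : |2 * t| = 2 * |t| := by rw [abs_mul, abs_two]
  have hcast : 2 * Complex.I * t = Complex.I * ((2 * t : ℝ) : ℂ) := by push_cast; ring
  have htwo : (2 : ℝ) ^ (1 + ε) ≤ 4 := by
    calc (2 : ℝ) ^ (1 + ε) ≤ 2 ^ (2 : ℝ) := by gcongr <;> linarith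
      _ = 4 := by norm_num
  rw [hcast]
  calc _ ≤ ‖riemannZeta₁ (1 + δ + Complex.I * ((2 * t : ℝ) : ℂ))‖ / (1 + |t|) :=
        norm_riemannZeta_one_add_add_I_mul_le hT (le_max_of_le_right (by linarith))
    _ ≤ K * (1 + |2 * t|) ^ (1 + ε) / (1 + |t|) := by grw [hbound]
    _ ≤ K * (2 * (1 + |t|)) ^ (1 + ε) / (1 + |t|) := by
        gcongr
        linarith
    _ ≤ K * (4 * (1 + |t|) ^ (1 + ε)) / (1 + |t|) := by
        rw [Real.mul_rpow zero_le_two hT.le]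
        gcongr
    _ = 4 * K * (1 + |t|) ^ ε := by
        rw [Real.rpow_add hT, Real.rpow_one]
        field_simp

lemma cube_le_mul_norm_riemannZeta₁_pow_four {ε K : ℝ} (hε : 0 < ε) (hε1 : ε ≤ 1)
    (hK : ∀ s : ℂ, 1 - ε / 4 ≤ s.re → s.re ≤ 3 → ‖riemannZeta₁ s‖ ≤ K * (1 + |s.im|) ^ (1 + ε))
    {δ t : ℝ} (hδ : δ ∈ Set.Ioc (0 : ℝ) 1) (ht : 1 ≤ |t|) :
    δ ^ 3 ≤ 64 * K ^ 4 * (1 + |t|) ^ ε *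
      (‖riemannZeta₁ (1 + δ + Complex.I * t)‖ / (1 + |t|)) ^ 4 := by
  obtain ⟨hδ0, hδ1⟩ := hδ
  set T : ℝ := 1 + |t|
  have hT : 0 < T := by positivity
  have hbound (u : ℝ) : ‖riemannZeta₁ (1 + δ + Complex.I * u)‖ ≤ K * (1 + |u|) ^ (1 + ε) := by
    simpa using hK (1 + δ + Complex.I * u) (by simp; linarith) (by simp; linarith)
  have hK0 : 0 ≤ K := nonneg_of_mul_nonneg_left ((norm_nonneg _).trans (hbound 0)) (by positivity)
  have hreal : ‖riemannZeta (1 + δ)‖ ≤ K / δ := by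
    have h := norm_riemannZeta_one_add_add_I_mul_le (u := 0) hδ0 (le_max_of_le_left (le_abs_self δ))
    have hb := hbound 0
    simp only [Complex.ofReal_zero, mul_zero, add_zero, abs_zero, Real.one_rpow, mul_one] at h hb
    exact h.trans (by gcongr)
  have hmid : ‖riemannZeta (1 + δ + Complex.I * t)‖ ≤
      2 * (‖riemannZeta₁ (1 + δ + Complex.I * t)‖ / T) := by
    refine (norm_riemannZeta_one_add_add_I_mul_le (half_pos hT)
      (le_max_of_le_right (by linarith))).trans (le_of_eq ?_)
    field_simp
  have hdouble : ‖riemannZeta (1 + δ + 2 * Complex.I * t)‖ ≤ 4 * K * T ^ ε :=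
    norm_riemannZeta_one_add_add_two_I_mul_le hε.le hε1 hbound ht
  calc δ ^ 3 ≤ δ ^ 3 * (‖riemannZeta (1 + δ)‖ ^ 3 * ‖riemannZeta (1 + δ + Complex.I * t)‖ ^ 4 *
        ‖riemannZeta (1 + δ + 2 * Complex.I * t)‖) :=
        le_mul_of_one_le_right (by positivity) (one_le_norm_riemannZeta_product hδ0 t)
    _ ≤ δ ^ 3 * ((K / δ) ^ 3 * (2 * (‖riemannZeta₁ (1 + δ + Complex.I * t)‖ / T)) ^ 4 *
        (4 * K * T ^ ε)) := by gcongr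
    _ = _ := by field_simp; ring

lemma abs_norm_riemannZeta₁_sub_le {ε K : ℝ} (hε : 0 < ε) (hε1 : ε ≤ 1) (hK0 : 0 < K)
    (hK : ∀ s : ℂ, 1 - ε / 4 ≤ s.re → s.re ≤ 3 → ‖riemannZeta₁ s‖ ≤ K * (1 + |s.im|) ^ (1 + ε))
    (t : ℝ) {δ δ' : ℝ} (hδ : δ ∈ Set.Ioc (0 : ℝ) 1) (hδ' : δ' ∈ Set.Ioc (0 : ℝ) 1) :
    |‖riemannZeta₁ (1 + δ + Complex.I * t)‖ - ‖riemannZeta₁ (1 + δ' + Complex.I * t)‖| ≤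
      16 * K / ε * (1 + |t|) ^ (1 + ε) * |δ - δ'| := by
  have hderiv (u : ℝ) : HasDerivAt (fun u : ℝ => riemannZeta₁ (1 + u + Complex.I * t))
      (deriv riemannZeta₁ (1 + u + Complex.I * t)) u := by
    have hinner : HasDerivAt (fun z : ℂ => 1 + z + Complex.I * t) 1 u :=
      ((hasDerivAt_id _).const_add 1).add_const _
    simpa using (differentiable_riemannZeta₁.differentiableAt.hasDerivAt.comp _ hinner).comp_ofReal
  have hbound : ∀ u ∈ Set.Ioc (0 : ℝ) 1, ‖deriv riemannZeta₁ (1 + u + Complex.I * t)‖ ≤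
      16 * K / ε * (1 + |t|) ^ (1 + ε) := by
    rintro u ⟨hu0, hu1⟩
    have h := norm_iteratedDeriv_le_of_norm_le_rpow_of_mem_strip differentiable_riemannZeta₁ hK0.le
      (by linarith) (by linarith) (by linarith) hK 1 (r := ε / 4)
      (s := 1 + u + Complex.I * t) (by simp; linarith) (by simp; linarith)
    rw [iteratedDeriv_one, Nat.factorial_one, Nat.cast_one, one_mul, pow_one] at h
    calc _ ≤ K * 2 ^ (1 + ε) * (1 + |t|) ^ (1 + ε) / (ε / 4) := by simpa using h
      _ ≤ K * 2 ^ (2 : ℝ) * (1 + |t|) ^ (1 + ε) / (ε / 4) := by gcongr <;> linarith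
      _ = 16 * K / ε * (1 + |t|) ^ (1 + ε) := by norm_num; ring
  have hlip := (convex_Ioc (0 : ℝ) 1).norm_image_sub_le_of_norm_hasDerivWithin_le
    (fun u _ => (hderiv u).hasDerivWithinAt) hbound hδ' hδ
  exact (abs_norm_sub_norm_le _ _).trans hlip

lemma exists_pos_le_norm_riemannZeta₁_of_abs_im_le (B : ℝ) :
    ∃ c : ℝ, 0 < c ∧ ∀ s : ℂ, 1 ≤ s.re → s.re ≤ 2 → |s.im| ≤ B → c ≤ ‖riemannZeta₁ s‖ := by
  obtain ⟨c, hc, h⟩ := (isCompact_Icc.reProdIm isCompact_Icc : IsCompact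
    (Set.Icc (1 : ℝ) 2 ×ℂ Set.Icc (-B) B)).exists_forall_le'
    differentiable_riemannZeta₁.continuous.norm.continuousOn
    (fun s hs => norm_pos_iff.mpr (riemannZeta₁_ne_zero_of_one_le_re hs.1.1))
  exact ⟨c, hc, fun s h1 h2 him => h s ⟨⟨h1, h2⟩, abs_le.mp him⟩⟩

lemma exists_rpow_le_norm_riemannZeta₁_of_one_le_abs_im {ε : ℝ} (hε : 0 < ε) (hε1 : ε ≤ 1) :
    ∃ c : ℝ, 0 < c ∧ ∀ s : ℂ, 1 < s.re → s.re ≤ 2 → 1 ≤ |s.im| →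
      c * (1 + |s.im|) ^ (1 - ε) ≤ ‖riemannZeta₁ s‖ := by
  obtain ⟨K, hK0, hK⟩ := exists_norm_riemannZeta₁_le_rpow (ε := ε / 4) (by linarith) (by linarith)
  set A : ℝ := max 1 (max (64 * K ^ 4) (16 * K / (ε / 4)))
  have hA1 : 1 ≤ A := le_max_left _ _
  have hA2 : 64 * K ^ 4 ≤ A := le_max_of_le_right (le_max_left _ _)
  have hA3 : 16 * K / (ε / 4) ≤ A := le_max_of_le_right (le_max_right _ _)
  refine ⟨1 / (16 * A ^ 4), by positivity, fun s h1 h2 him => ?_⟩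
  set T : ℝ := 1 + |s.im|
  have hT : 1 ≤ T := le_add_of_nonneg_right (abs_nonneg _)
  have hkey := one_div_le_of_cube_le_mul_pow_four (Z := A * T ^ (ε / 4)) (δ := s.re - 1)
    (y := fun δ => ‖riemannZeta₁ (1 + δ + Complex.I * s.im)‖ / T)
    (one_le_mul_of_one_le_of_one_le hA1 (Real.one_le_rpow hT (by linarith)))
    (fun δ => by positivity) (fun δ hδ => ?_) (fun δ hδ δ' hδ' => ?_) ⟨by linarith, by linarith⟩
  · have hs : 1 + ((s.re - 1 : ℝ) : ℂ) + Complex.I * s.im = s := by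
      apply Complex.ext <;> simp
    rw [hs, le_div_iff₀ (by positivity)] at hkey
    refine le_of_eq_of_le ?_ hkey
    rw [mul_pow, ← Real.rpow_mul_natCast (by positivity), Real.rpow_sub (by positivity),
      Real.rpow_one, Nat.cast_ofNat, div_mul_cancel₀ _ four_ne_zero]
    field_simp
  · refine (cube_le_mul_norm_riemannZeta₁_pow_four (by linarith) (by linarith) hK hδ him).trans ?_
    gcongr
  · rw [← sub_div, abs_div, abs_of_pos (by positivity : 0 < T), div_le_iff₀ (by positivity)]
    calc _ ≤ 16 * K / (ε / 4) * T ^ (1 + ε / 4) * |δ - δ'| :=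
          abs_norm_riemannZeta₁_sub_le (by linarith) (by linarith) hK0 hK _ hδ hδ'
      _ ≤ A * T ^ (1 + ε / 4) * |δ - δ'| := by gcongr
      _ = A * T ^ (ε / 4) * |δ - δ'| * T := by
          rw [Real.rpow_add (by positivity), Real.rpow_one]
          ring

lemma exists_rpow_le_norm_riemannZeta₁ {ε : ℝ} (hε : 0 < ε) (hε1 : ε ≤ 1) :
    ∃ c : ℝ, 0 < c ∧ ∀ s : ℂ, 1 < s.re → s.re ≤ 2 →
      c * (1 + |s.im|) ^ (1 - ε) ≤ ‖riemannZeta₁ s‖ := by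
  obtain ⟨c, hc, hlarge⟩ := exists_rpow_le_norm_riemannZeta₁_of_one_le_abs_im hε hε1
  obtain ⟨c', hc', hsmall⟩ := exists_pos_le_norm_riemannZeta₁_of_abs_im_le 1
  refine ⟨min c (c' / 2), by positivity, fun s h1 h2 => ?_⟩
  rcases le_total 1 |s.im| with him | him
  · grw [min_le_left]
    exact hlarge s h1 h2 him
  · refine le_trans ?_ (hsmall s h1.le h2 him)
    calc min c (c' / 2) * (1 + |s.im|) ^ (1 - ε) ≤ c' / 2 * 2 ^ (1 - ε) := by
          gcongr
          · exact min_le_right _ _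
          · linarith
      _ ≤ c' / 2 * 2 := by
          gcongr
          exact Real.rpow_le_self_of_one_le one_le_two (by linarith)
      _ = c' := div_mul_cancel₀ _ two_ne_zero

lemma norm_logDeriv_le_of_mem_closedBall {f : ℂ → ℂ} {s : ℂ} {R M : ℝ} (hR : 0 < R)
    (hf : DiffContOnCl ℂ f (Metric.ball s R)) (hM : ∀ z ∈ Metric.closedBall s R, ‖f z‖ ≤ M)
    (hs : f s ≠ 0) {z : ℂ} (hz : z ∈ Metric.closedBall s (R * ‖f s‖ / (4 * M))) :
    f z ≠ 0 ∧ ‖logDeriv f z‖ ≤ 4 * M / (R * ‖f s‖) := by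
  have hfs : 0 < ‖f s‖ := norm_pos_iff.mpr hs
  have hfsM : ‖f s‖ ≤ M := hM s (Metric.mem_closedBall_self hR.le)
  have hM0 : 0 < M := hfs.trans_le hfsM
  have hderiv : ∀ w ∈ Metric.closedBall s (R / 2), ‖deriv f w‖ ≤ M / (R / 2) := fun w hw => by
    have hsub : Metric.closedBall w (R / 2) ⊆ Metric.closedBall s R :=
      Metric.closedBall_subset_closedBall' (by linarith [Metric.mem_closedBall.mp hw])
    have hball : Metric.ball w (R / 2) ⊆ Metric.ball s R :=
      Metric.ball_subset_ball' (by linarith [Metric.mem_closedBall.mp hw])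
    exact Complex.norm_deriv_le_of_forall_mem_sphere_norm_le (half_pos hR) (hf.mono hball)
      fun v hv => hM v (hsub (Metric.sphere_subset_closedBall hv))
  have hz2 : z ∈ Metric.closedBall s (R / 2) := by
    refine Metric.closedBall_subset_closedBall ?_ hz
    rw [div_le_div_iff₀ (by positivity) two_pos]
    nlinarith
  have hdiff : ‖f z - f s‖ ≤ ‖f s‖ / 2 := by
    calc _ ≤ M / (R / 2) * ‖z - s‖ :=
        (convex_closedBall s (R / 2)).norm_image_sub_le_of_norm_deriv_le
          (fun w hw => hf.differentiableAt Metric.isOpen_ball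
            (Metric.closedBall_subset_ball (half_lt_self hR) hw)) hderiv
          (Metric.mem_closedBall_self (half_pos hR).le) hz2
      _ ≤ M / (R / 2) * (R * ‖f s‖ / (4 * M)) := by
          gcongr
          exact mem_closedBall_iff_norm.mp hz
      _ = ‖f s‖ / 2 := by field_simp; norm_num
  have hlower : ‖f s‖ / 2 ≤ ‖f z‖ := by
    linarith [norm_le_norm_add_norm_sub (f z) (f s)]
  refine ⟨norm_pos_iff.mp ((half_pos hfs).trans_le hlower), ?_⟩
  rw [logDeriv_apply, norm_div]
  calc _ ≤ M / (R / 2) / (‖f s‖ / 2) := by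
        gcongr
        exact hderiv z hz2
    _ = 4 * M / (R * ‖f s‖) := by field_simp; norm_num

lemma norm_iteratedDeriv_logDeriv_le {f : ℂ → ℂ} {s : ℂ} {R M : ℝ} (hR : 0 < R)
    (hf : DiffContOnCl ℂ f (Metric.ball s R)) (hM : ∀ z ∈ Metric.closedBall s R, ‖f z‖ ≤ M)
    (hs : f s ≠ 0) (k : ℕ) :
    ‖iteratedDeriv k (logDeriv f) s‖ ≤ k.factorial * (4 * M / (R * ‖f s‖)) ^ (k + 1) := by
  have hfs : 0 < ‖f s‖ := norm_pos_iff.mpr hs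
  have hfsM : ‖f s‖ ≤ M := hM s (Metric.mem_closedBall_self hR.le)
  have hM0 : 0 < M := hfs.trans_le hfsM
  set r : ℝ := R * ‖f s‖ / (4 * M) with hr
  have hrR : r < R := by
    rw [hr, div_lt_iff₀ (by positivity)]
    nlinarith
  have hdiff : DifferentiableOn ℂ (logDeriv f) (Metric.closedBall s r) := fun z hz => by
    have hball : z ∈ Metric.ball s R := Metric.closedBall_subset_ball hrR hz
    have hfz := (hf.differentiableOn.deriv Metric.isOpen_ball).differentiableAt
      (Metric.isOpen_ball.mem_nhds hball)
    exact (hfz.div (hf.differentiableAt Metric.isOpen_ball hball)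
      (norm_logDeriv_le_of_mem_closedBall hR hf hM hs hz).1).differentiableWithinAt
  calc _ ≤ k.factorial * (4 * M / (R * ‖f s‖)) / r ^ k :=
        Complex.norm_iteratedDeriv_le_of_forall_mem_sphere_norm_le k (by positivity)
          (hdiff.diffContOnCl_ball subset_rfl) fun z hz =>
            (norm_logDeriv_le_of_mem_closedBall hR hf hM hs (Metric.sphere_subset_closedBall hz)).2
    _ = k.factorial * (4 * M / (R * ‖f s‖)) ^ (k + 1) := by
        rw [hr, pow_succ', ← inv_div (R * ‖f s‖), inv_pow]
        ring

lemma exists_norm_iteratedDeriv_logDeriv_riemannZeta₁_le (k : ℕ) {ε : ℝ} (hε : 0 < ε)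
    (hε1 : ε ≤ 1) : ∃ C : ℝ, ∀ s : ℂ, 1 < s.re → s.re ≤ 2 →
      ‖iteratedDeriv k (logDeriv riemannZeta₁) s‖ ≤ C * (1 + |s.im|) ^ ε := by
  set η : ℝ := ε / (2 * (k + 1)) with hη
  have hη0 : 0 < η := by positivity
  have hηε : (η + η) * (k + 1) = ε := by
    rw [hη]
    field_simp
    norm_num
  have hη1 : η ≤ 1 := by
    nlinarith [(Nat.cast_nonneg k : (0 : ℝ) ≤ k)]
  obtain ⟨K, hK0, hK⟩ := exists_norm_riemannZeta₁_le_rpow hη0 hη1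
  obtain ⟨c, hc, hlower⟩ := exists_rpow_le_norm_riemannZeta₁ hη0 hη1
  refine ⟨k.factorial * (4 * (K * 4) / (η / 4 * c)) ^ (k + 1), fun s h1 h2 => ?_⟩
  set T : ℝ := 1 + |s.im|
  have hT : 0 < T := by positivity
  have hM : ∀ z ∈ Metric.closedBall s (η / 4), ‖riemannZeta₁ z‖ ≤ K * 4 * T ^ (1 + η) := by
    intro z hz
    obtain ⟨hre, hre', him⟩ := re_im_of_mem_closedBall hz
    calc ‖riemannZeta₁ z‖ ≤ K * (1 + |z.im|) ^ (1 + η) := hK z (by linarith) (by linarith)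
      _ ≤ K * (2 * T) ^ (1 + η) := by
          gcongr
          linarith [abs_nonneg s.im, show T = 1 + |s.im| from rfl]
      _ = K * 2 ^ (1 + η) * T ^ (1 + η) := by rw [Real.mul_rpow zero_le_two hT.le, mul_assoc]
      _ ≤ K * 2 ^ (2 : ℝ) * T ^ (1 + η) := by gcongr <;> linarith
      _ = K * 4 * T ^ (1 + η) := by norm_num
  calc _ ≤ k.factorial * (4 * (K * 4 * T ^ (1 + η)) / (η / 4 * ‖riemannZeta₁ s‖)) ^ (k + 1) :=
        norm_iteratedDeriv_logDeriv_le (by positivity)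
          differentiable_riemannZeta₁.diffContOnCl hM (riemannZeta₁_ne_zero_of_one_le_re h1.le) k
    _ ≤ k.factorial * (4 * (K * 4 * T ^ (1 + η)) / (η / 4 * (c * T ^ (1 - η)))) ^ (k + 1) := by
        gcongr
        exact hlower s h1 h2
    _ = k.factorial * (4 * (K * 4) / (η / 4 * c) * T ^ (η + η)) ^ (k + 1) := by
        have hpow : T ^ (1 + η) = T ^ (η + η) * T ^ (1 - η) := by
          rw [← Real.rpow_add hT, add_add_sub_cancel, add_comm]
        rw [hpow]
        field_simp
    _ = k.factorial * (4 * (K * 4) / (η / 4 * c)) ^ (k + 1) * T ^ ε := by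
        rw [mul_pow, ← Real.rpow_mul_natCast hT.le, Nat.cast_add_one, hηε, mul_assoc]

lemma exists_norm_riemannZeta₀_le_rpow {ε : ℝ} (hε : 0 < ε) (hε1 : ε ≤ 1) :
    ∃ K : ℝ, 0 < K ∧ ∀ s : ℂ, 1 - ε / 4 ≤ s.re → s.re ≤ 3 →
      ‖riemannZeta₀ s‖ ≤ K * (1 + |s.im|) ^ ε := by
  obtain ⟨K, hK0, hK⟩ := exists_norm_riemannZeta₁_le_rpow hε hε1
  obtain ⟨B, hB⟩ := (isCompact_closedBall (1 : ℂ) (1 / 2)).exists_bound_of_continuousOn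
    differentiable_riemannZeta₀.continuous.continuousOn
  refine ⟨max B (3 * (K + 1)), by positivity, fun s hs hs3 => ?_⟩
  set T : ℝ := 1 + |s.im|
  have hT : 1 ≤ T := le_add_of_nonneg_right (abs_nonneg _)
  rcases le_total ‖s - 1‖ (1 / 2) with hnear | hfar
  · calc ‖riemannZeta₀ s‖ ≤ max B (3 * (K + 1)) :=
          (hB s (mem_closedBall_iff_norm.mpr hnear)).trans (le_max_left _ _)
      _ ≤ max B (3 * (K + 1)) * T ^ ε :=
          le_mul_of_one_le_right (by positivity) (Real.one_le_rpow hT hε.le)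
  · have hT_le : T ≤ 3 * ‖s - 1‖ := by
      have him : |s.im| ≤ ‖s - 1‖ := by simpa using Complex.abs_im_le_norm (s - 1)
      linarith [show T = 1 + |s.im| from rfl]
    have hmul : ‖s - 1‖ * ‖riemannZeta₀ s‖ ≤ (K + 1) * T ^ (1 + ε) := by
      calc ‖s - 1‖ * ‖riemannZeta₀ s‖ = ‖riemannZeta₁ s - 1‖ := by
            rw [riemannZeta₁, add_sub_cancel_left, norm_mul]
        _ ≤ K * T ^ (1 + ε) + 1 := by
            grw [norm_sub_le, hK s hs hs3, norm_one]
        _ ≤ (K + 1) * T ^ (1 + ε) := by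
            linarith [Real.one_le_rpow hT (by linarith : 0 ≤ 1 + ε)]
    rw [Real.rpow_add (by positivity), Real.rpow_one] at hmul
    refine le_of_mul_le_mul_left ?_ (by positivity : 0 < T)
    calc T * ‖riemannZeta₀ s‖ ≤ 3 * (‖s - 1‖ * ‖riemannZeta₀ s‖) := by
          rw [← mul_assoc]
          gcongr
      _ ≤ T * (3 * (K + 1) * T ^ ε) := by linarith
      _ ≤ T * (max B (3 * (K + 1)) * T ^ ε) := by
          gcongr
          exact le_max_right _ _

lemma exists_norm_iteratedDeriv_riemannZeta₀_le (k : ℕ) {ε : ℝ} (hε : 0 < ε) (hε1 : ε ≤ 1) :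
    ∃ C : ℝ, ∀ s : ℂ, 1 ≤ s.re → s.re ≤ 2 →
      ‖iteratedDeriv k riemannZeta₀ s‖ ≤ C * (1 + |s.im|) ^ ε := by
  obtain ⟨K, hK0, hK⟩ := exists_norm_riemannZeta₀_le_rpow hε hε1
  refine ⟨k.factorial * (K * 2 ^ ε) / (ε / 4) ^ k, fun s h1 h2 => ?_⟩
  refine (norm_iteratedDeriv_le_of_norm_le_rpow_of_mem_strip differentiable_riemannZeta₀ hK0.le
    hε.le (by linarith) (by linarith) hK k (r := ε / 4) (by linarith)
    (by linarith)).trans (le_of_eq ?_)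
  ring

lemma neg_logDeriv_riemannZeta₁_sub_riemannZeta₀ {s : ℂ} (hs : 1 ≤ s.re) (hs1 : s ≠ 1) :
    -logDeriv riemannZeta₁ s - riemannZeta₀ s =
      -deriv riemannZeta s / riemannZeta s - riemannZeta s := by
  have hsub : s - 1 ≠ 0 := sub_ne_zero.mpr hs1
  have hlog : deriv riemannZeta s / riemannZeta s = -(s - 1)⁻¹ + logDeriv riemannZeta₁ s := by
    have hne := riemannZeta₁_ne_zero_of_one_le_re hs
    rw [deriv_riemannZeta_eq_neg_inv_sub_sq_mul_add hs1, riemannZeta_eq_inv_sub_mul hs1,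
      logDeriv_apply]
    field_simp
  rw [neg_div, hlog, riemannZeta_eq_inv_sub_add hs1]
  ring

lemma abscissaOfAbsConv_vonMangoldt_sub_one_le :
    LSeries.abscissaOfAbsConv (fun n => (Λ n : ℂ) - 1) ≤ 1 := by
  refine LSeries.abscissaOfAbsConv_le_of_forall_lt_LSeriesSummable' fun y hy => ?_
  have hy : 1 < (y : ℂ).re := by exact_mod_cast hy
  exact (LSeriesSummable_vonMangoldt hy).sub (LSeriesSummable_one_iff.mpr hy)

lemma LSeries_vonMangoldt_sub_one {s : ℂ} (hs : 1 < s.re) :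
    LSeries (fun n => (Λ n : ℂ) - 1) s = -logDeriv riemannZeta₁ s - riemannZeta₀ s := by
  rw [neg_logDeriv_riemannZeta₁_sub_riemannZeta₀ hs.le (by rintro rfl; simp at hs),
    ← LSeries_vonMangoldt_eq_deriv_riemannZeta_div hs, ← LSeries_one_eq_riemannZeta hs]
  exact LSeries_sub (LSeriesSummable_vonMangoldt hs) (LSeriesSummable_one_iff.mpr hs)

lemma logMul_iterate_eq (f : ℕ → ℂ) (k : ℕ) :
    LSeries.logMul^[k] f = fun n => f n * (Real.log n : ℂ) ^ k := by
  induction k with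
  | zero => simp
  | succ k ih =>
    rw [Function.iterate_succ_apply', ih]
    ext n
    rw [LSeries.logMul, ← Complex.natCast_log]
    ring

lemma LSeriesSummable_vonMangoldt_sub_one_mul_log_pow (k : ℕ) {s : ℂ} (hs : 1 < s.re) :
    LSeriesSummable (fun n => ((Λ n : ℂ) - 1) * (Real.log n : ℂ) ^ k) s := by
  refine LSeriesSummable_of_abscissaOfAbsConv_lt_re ?_
  rw [← logMul_iterate_eq, LSeries.absicssaOfAbsConv_logPowMul]
  exact abscissaOfAbsConv_vonMangoldt_sub_one_le.trans_lt (by exact_mod_cast hs)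

lemma norm_LSeries_vonMangoldt_sub_one_mul_log_pow_le (k : ℕ) {s : ℂ} (hs : 1 < s.re) :
    ‖LSeries (fun n => ((Λ n : ℂ) - 1) * (Real.log n : ℂ) ^ k) s‖ ≤
      ‖iteratedDeriv k (logDeriv riemannZeta₁) s‖ + ‖iteratedDeriv k riemannZeta₀ s‖ := by
  have habscissa : LSeries.abscissaOfAbsConv (fun n => (Λ n : ℂ) - 1) < s.re :=
    abscissaOfAbsConv_vonMangoldt_sub_one_le.trans_lt (by exact_mod_cast hs)
  have hnorm : ‖iteratedDeriv k (LSeries fun n => (Λ n : ℂ) - 1) s‖ =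
      ‖LSeries (fun n => ((Λ n : ℂ) - 1) * (Real.log n : ℂ) ^ k) s‖ := by
    rw [LSeries_iteratedDeriv k habscissa, logMul_iterate_eq]
    simp
  have hana : AnalyticAt ℂ (logDeriv riemannZeta₁) s :=
    (differentiable_riemannZeta₁.analyticAt s).deriv.div (differentiable_riemannZeta₁.analyticAt s)
      (riemannZeta₁_ne_zero_of_one_le_re hs.le)
  have heq : LSeries (fun n => (Λ n : ℂ) - 1) =ᶠ[nhds s]
      -logDeriv riemannZeta₁ - riemannZeta₀ := by
    filter_upwards [(isOpen_lt continuous_const Complex.continuous_re).mem_nhds hs] with z hz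
    exact LSeries_vonMangoldt_sub_one hz
  rw [← hnorm, heq.iteratedDeriv_eq, iteratedDeriv_sub hana.neg.contDiffAt
    (differentiable_riemannZeta₀.analyticAt s).contDiffAt, iteratedDeriv_neg]
  exact (norm_sub_le _ _).trans_eq (by rw [norm_neg])

lemma exists_norm_LSeries_vonMangoldt_sub_one_mul_log_pow_le (k : ℕ) {ε : ℝ} (hε : 0 < ε)
    (hε1 : ε ≤ 1) : ∃ C : ℝ, ∀ s : ℂ, 1 < s.re → s.re ≤ 2 →
      ‖LSeries (fun n => ((Λ n : ℂ) - 1) * (Real.log n : ℂ) ^ k) s‖ ≤ C * (1 + |s.im|) ^ ε := by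
  obtain ⟨C₁, hlogDeriv⟩ := exists_norm_iteratedDeriv_logDeriv_riemannZeta₁_le k hε hε1
  obtain ⟨C₀, hzeta⟩ := exists_norm_iteratedDeriv_riemannZeta₀_le k hε hε1
  refine ⟨C₁ + C₀, fun s h1 h2 => ?_⟩
  rw [add_mul]
  exact (norm_LSeries_vonMangoldt_sub_one_mul_log_pow_le k h1).trans
    (add_le_add (hlogDeriv s h1 h2) (hzeta s h1.le h2))

lemma hasMellin_max_one_sub {s : ℂ} (hs : 0 < s.re) :
    HasMellin (fun t : ℝ => ((max (1 - t) 0 : ℝ) : ℂ)) s (s * (s + 1))⁻¹ := by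
  have hone := hasMellin_one_Ioc hs
  have hpow := hasMellin_cpow_Ioc 1 (s := s) (by rw [Complex.one_re]; linarith)
  have hsub := hasMellin_sub hone.1 hpow.1
  have heq : Set.EqOn (fun t : ℝ => (t : ℂ) ^ (s - 1) •
      ((Set.Ioc 0 1).indicator (fun _ => 1 : ℝ → ℂ) t -
        (Set.Ioc 0 1).indicator (fun t => (t : ℂ) ^ (1 : ℂ) : ℝ → ℂ) t))
      (fun t : ℝ => (t : ℂ) ^ (s - 1) • ((max (1 - t) 0 : ℝ) : ℂ)) (Set.Ioi 0) := by
    intro t ht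
    rcases le_or_gt t 1 with h | h
    · simp [show t ∈ Set.Ioc (0 : ℝ) 1 from ⟨ht, h⟩, max_eq_left (sub_nonneg.mpr h)]
    · simp [show t ∉ Set.Ioc (0 : ℝ) 1 from fun h' => h.not_ge h'.2,
        max_eq_right (sub_nonpos.mpr h.le)]
  refine ⟨(integrableOn_congr_fun heq measurableSet_Ioi).mp hsub.1,
    (setIntegral_congr_fun measurableSet_Ioi heq).symm.trans (hsub.2.trans ?_)⟩
  have hs0 : s ≠ 0 := Complex.ne_zero_of_re_pos hs
  have hs1 : s + 1 ≠ 0 :=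
    Complex.ne_zero_of_re_pos (by rw [Complex.add_re, Complex.one_re]; linarith)
  rw [hone.2, hpow.2]
  field_simp
  ring

lemma norm_inv_mul_add_one_le {s : ℂ} (hs : 0 < s.re) : ‖(s * (s + 1))⁻¹‖ ≤ (‖s‖ ^ 2)⁻¹ := by
  have hle : ‖s‖ ≤ ‖s + 1‖ := by
    rw [← sq_le_sq₀ (norm_nonneg _) (norm_nonneg _), ← Complex.normSq_eq_norm_sq,
      ← Complex.normSq_eq_norm_sq, Complex.normSq_apply, Complex.normSq_apply, Complex.add_re,
      Complex.add_im, Complex.one_re, Complex.one_im]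
    nlinarith
  have hs0 : 0 < ‖s‖ := norm_pos_iff.mpr (Complex.ne_zero_of_re_pos hs)
  rw [norm_inv, norm_mul, sq]
  gcongr

lemma norm_inv_mul_add_one_le_of_one_le_re {s : ℂ} (hs : 1 ≤ s.re) :
    ‖(s * (s + 1))⁻¹‖ ≤ 2 * (1 + |s.im|) ^ (-2 : ℝ) := by
  have hle : (1 + |s.im|) ^ 2 / 2 ≤ ‖s‖ ^ 2 := by
    rw [← Complex.normSq_eq_norm_sq, Complex.normSq_apply]
    nlinarith [sq_abs s.im, sq_nonneg (1 - |s.im|)]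
  calc _ ≤ (‖s‖ ^ 2)⁻¹ := norm_inv_mul_add_one_le (by linarith)
    _ ≤ ((1 + |s.im|) ^ 2 / 2)⁻¹ := by gcongr
    _ = 2 * (1 + |s.im|) ^ (-2 : ℝ) := by
        rw [Real.rpow_neg (by positivity), Real.rpow_two, inv_div, div_eq_mul_inv]

lemma continuous_inv_mul_add_one {σ : ℝ} (hσ : 0 < σ) : Continuous fun t : ℝ =>
    (((σ : ℂ) + t * Complex.I) * (σ + t * Complex.I + 1))⁻¹ := by
  refine Continuous.inv₀ (by fun_prop) fun t => mul_ne_zero ?_ ?_ <;>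
    refine Complex.ne_zero_of_re_pos ?_ <;> simp <;> linarith

lemma integrable_inv_mul_add_one {σ : ℝ} (hσ : 0 < σ) : Integrable fun t : ℝ =>
    (((σ : ℂ) + t * Complex.I) * (σ + t * Complex.I + 1))⁻¹ := by
  refine (integrable_inv_one_add_sq.const_mul (min (σ ^ 2) 1)⁻¹).mono'
    (continuous_inv_mul_add_one hσ).aestronglyMeasurable (.of_forall fun t => ?_)
  refine (norm_inv_mul_add_one_le (by simpa)).trans ?_
  rw [← mul_inv, ← Complex.normSq_eq_norm_sq, Complex.normSq_add_mul_I]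
  gcongr
  nlinarith [min_le_left (σ ^ 2) 1, min_le_right (σ ^ 2) 1, sq_nonneg t]

lemma ofReal_max_one_sub_eq_integral {σ u : ℝ} (hσ : 0 < σ) (hu : 0 < u) :
    ((max (1 - u) 0 : ℝ) : ℂ) = (1 / (2 * π)) • ∫ t : ℝ, (u : ℂ) ^ (-((σ : ℂ) + t * Complex.I)) •
      (((σ : ℂ) + t * Complex.I) * (σ + t * Complex.I + 1))⁻¹ := by
  have hmellin (t : ℝ) := hasMellin_max_one_sub (s := σ + t * Complex.I) (by simpa)
  have hinv := mellinInv_mellin_eq σ (fun t : ℝ => ((max (1 - t) 0 : ℝ) : ℂ)) hu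
    (by simpa using (hmellin 0).1)
    (by simpa only [Complex.VerticalIntegrable, (hmellin _).2] using integrable_inv_mul_add_one hσ)
    (by fun_prop)
  simpa only [mellinInv, (hmellin _).2] using hinv.symm

/-- The `n`-th summand of the Perron integrand `x ^ s / (s * (s + 1)) * L(c, s)` at
`s = σ + t * I`, with the kernel that produces the weights `1 - n / x`. -/
noncomputable def rieszPerronTerm (c : ℕ → ℂ) (x σ : ℝ) (n : ℕ) (t : ℝ) : ℂ :=
  (x : ℂ) ^ ((σ : ℂ) + t * Complex.I) *
    (((σ : ℂ) + t * Complex.I) * (σ + t * Complex.I + 1))⁻¹ *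
      LSeries.term c (σ + t * Complex.I) n

section RieszPerron

variable {c : ℕ → ℂ} {x σ : ℝ}

lemma norm_rieszPerronTerm (hx : 0 < x) (n : ℕ) (t : ℝ) :
    ‖rieszPerronTerm c x σ n t‖ = x ^ σ * ‖LSeries.term c σ n‖ *
      ‖(((σ : ℂ) + t * Complex.I) * (σ + t * Complex.I + 1))⁻¹‖ := by
  have hterm : ‖LSeries.term c (σ + t * Complex.I) n‖ = ‖LSeries.term c σ n‖ := by
    simp [LSeries.norm_term_eq]
  rw [rieszPerronTerm, norm_mul, norm_mul, hterm, Complex.norm_cpow_eq_rpow_re_of_pos hx,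
    Complex.add_re, Complex.ofReal_re, Complex.re_ofReal_mul, Complex.I_re, mul_zero, add_zero,
    mul_right_comm]

lemma continuous_rieszPerronTerm (hx : 0 < x) (hσ : 0 < σ) (n : ℕ) :
    Continuous (rieszPerronTerm c x σ n) := by
  have hpow : Continuous fun t : ℝ => (x : ℂ) ^ ((σ : ℂ) + t * Complex.I) :=
    Continuous.const_cpow (by fun_prop) (.inl (by exact_mod_cast hx.ne'))
  refine (hpow.mul (continuous_inv_mul_add_one hσ)).mul ?_
  rcases eq_or_ne n 0 with rfl | hn
  · simpa using continuous_const
  · have hn' : (n : ℂ) ≠ 0 := Nat.cast_ne_zero.mpr hn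
    simp only [LSeries.term_of_ne_zero hn]
    refine continuous_const.div (Continuous.const_cpow (by fun_prop) (.inl hn')) fun t => ?_
    simp [Complex.cpow_eq_zero_iff, hn']

lemma integrable_rieszPerronTerm (hx : 0 < x) (hσ : 0 < σ) (n : ℕ) :
    Integrable (rieszPerronTerm c x σ n) :=
  ((integrable_inv_mul_add_one hσ).norm.const_mul (x ^ σ * ‖LSeries.term c σ n‖)).mono'
    (continuous_rieszPerronTerm hx hσ n).aestronglyMeasurable
    (.of_forall fun t => (norm_rieszPerronTerm hx n t).le)

lemma integral_rieszPerronTerm (hx : 0 < x) (hσ : 0 < σ) {n : ℕ} (hn : n ≠ 0) :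
    (1 / (2 * π)) • ∫ t, rieszPerronTerm c x σ n t = c n * ((max (1 - n / x) 0 : ℝ) : ℂ) := by
  have hn' : (0 : ℝ) < n := Nat.cast_pos.mpr (Nat.pos_of_ne_zero hn)
  rw [ofReal_max_one_sub_eq_integral hσ (div_pos hn' hx), mul_smul_comm, ← integral_const_mul]
  congr 2 with t
  have hcpow : (((n : ℝ) / x : ℝ) : ℂ) ^ (-((σ : ℂ) + t * Complex.I)) =
      (x : ℂ) ^ ((σ : ℂ) + t * Complex.I) / (n : ℂ) ^ ((σ : ℂ) + t * Complex.I) := by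
    rw [Complex.cpow_neg, Complex.ofReal_div, Complex.div_cpow_ofReal_nonneg hn'.le hx.le, inv_div,
      Complex.ofReal_natCast]
  rw [rieszPerronTerm, LSeries.term_of_ne_zero hn, hcpow, smul_eq_mul]
  ring

lemma sum_mul_one_sub_div_eq_integral (hx : 0 < x) (hσ : 0 < σ) (hc : LSeriesSummable c σ) :
    ∑ n ∈ Finset.Ioc 0 ⌊x⌋₊, c n * ((1 - n / x : ℝ) : ℂ) =
      (1 / (2 * π)) • ∫ t : ℝ, (x : ℂ) ^ ((σ : ℂ) + t * Complex.I) *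
        (((σ : ℂ) + t * Complex.I) * (σ + t * Complex.I + 1))⁻¹ *
          LSeries c (σ + t * Complex.I) := by
  have hsummable : Summable fun n => ∫ t, ‖rieszPerronTerm c x σ n t‖ := by
    simp only [norm_rieszPerronTerm hx, integral_const_mul]
    exact (hc.norm.mul_left _).mul_right _
  have hsum := (hasSum_integral_of_summable_integral_norm (integrable_rieszPerronTerm hx hσ)
    hsummable).const_smul (1 / (2 * π))
  calc _ = ∑ n ∈ Finset.Ioc 0 ⌊x⌋₊, (1 / (2 * π)) • ∫ t, rieszPerronTerm c x σ n t := by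
        refine Finset.sum_congr rfl fun n hn => ?_
        obtain ⟨hn0, hnx⟩ := Finset.mem_Ioc.mp hn
        rw [integral_rieszPerronTerm hx hσ hn0.ne', max_eq_left]
        rw [sub_nonneg, div_le_one hx]
        exact (Nat.le_floor_iff hx.le).mp hnx
    _ = ∑' n, (1 / (2 * π)) • ∫ t, rieszPerronTerm c x σ n t := by
        refine (tsum_eq_sum fun n hn => ?_).symm
        rcases eq_or_ne n 0 with rfl | hn0
        · simp [rieszPerronTerm]
        · have hxn : x < n := (Nat.floor_lt hx.le).mp (by
            simpa [Nat.pos_of_ne_zero hn0] using hn)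
          rw [integral_rieszPerronTerm hx hσ hn0, max_eq_right, Complex.ofReal_zero, mul_zero]
          rw [sub_nonpos, one_le_div hx]
          exact hxn.le
    _ = (1 / (2 * π)) • ∫ t, ∑' n, rieszPerronTerm c x σ n t := hsum.tsum_eq
    _ = _ := by
        simp only [rieszPerronTerm, tsum_mul_left]
        rfl

lemma norm_sum_mul_one_sub_div_le_rpow {C κ : ℝ} (hκ : κ < 1) (hx : 0 < x) (hσ : 1 ≤ σ)
    (hc : LSeriesSummable c σ)
    (hbound : ∀ t : ℝ, ‖LSeries c (σ + t * Complex.I)‖ ≤ C * (1 + |t|) ^ κ) :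
    ‖∑ n ∈ Finset.Ioc 0 ⌊x⌋₊, c n * ((1 - n / x : ℝ) : ℂ)‖ ≤
      1 / π * (C * ∫ t : ℝ, (1 + |t|) ^ (-(2 - κ))) * x ^ σ := by
  have hintegrable : Integrable fun t : ℝ => (1 + |t|) ^ (-(2 - κ)) :=
    integrable_one_add_norm (E := ℝ) (by rw [Module.finrank_self, Nat.cast_one]; linarith)
  rw [sum_mul_one_sub_div_eq_integral hx (by linarith) hc, norm_smul,
    Real.norm_of_nonneg (by positivity)]
  have hpoint (t : ℝ) : ‖(x : ℂ) ^ ((σ : ℂ) + t * Complex.I) *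
      (((σ : ℂ) + t * Complex.I) * (σ + t * Complex.I + 1))⁻¹ *
        LSeries c (σ + t * Complex.I)‖ ≤ 2 * x ^ σ * C * (1 + |t|) ^ (-(2 - κ)) := by
    have hkernel := norm_inv_mul_add_one_le_of_one_le_re (s := σ + t * Complex.I) (by simpa)
    simp only [Complex.add_im, Complex.ofReal_im, Complex.im_ofReal_mul, Complex.I_im, mul_one,
      zero_add] at hkernel
    have hre : ((σ : ℂ) + t * Complex.I).re = σ := by simp
    rw [norm_mul, norm_mul, Complex.norm_cpow_eq_rpow_re_of_pos hx, hre]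
    calc _ ≤ x ^ σ * (2 * (1 + |t|) ^ (-2 : ℝ)) * (C * (1 + |t|) ^ κ) := by
          gcongr
          exact hbound t
      _ = 2 * x ^ σ * C * (1 + |t|) ^ (-(2 - κ)) := by
          rw [neg_sub', sub_neg_eq_add, Real.rpow_add (by positivity)]
          ring
  calc _ ≤ 1 / (2 * π) * ∫ t : ℝ, 2 * x ^ σ * C * (1 + |t|) ^ (-(2 - κ)) := by
        gcongr
        exact norm_integral_le_of_norm_le (hintegrable.const_mul _) (.of_forall hpoint)
    _ = 1 / π * (C * ∫ t : ℝ, (1 + |t|) ^ (-(2 - κ))) * x ^ σ := by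
        rw [integral_const_mul]
        field_simp

lemma exists_norm_sum_mul_one_sub_div_le {C κ : ℝ} (hκ : κ < 1)
    (hc : ∀ s : ℂ, 1 < s.re → LSeriesSummable c s)
    (hbound : ∀ s : ℂ, 1 < s.re → s.re ≤ 2 → ‖LSeries c s‖ ≤ C * (1 + |s.im|) ^ κ) :
    ∃ C' : ℝ, ∀ x : ℝ, 0 < x →
      ‖∑ n ∈ Finset.Ioc 0 ⌊x⌋₊, c n * ((1 - n / x : ℝ) : ℂ)‖ ≤ C' * x := by
  refine ⟨1 / π * (C * ∫ t : ℝ, (1 + |t|) ^ (-(2 - κ))), fun x hx => ?_⟩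
  have hlim : Tendsto (fun σ : ℝ => 1 / π * (C * ∫ t : ℝ, (1 + |t|) ^ (-(2 - κ))) * x ^ σ)
      (nhdsWithin 1 (Set.Ioi 1))
      (nhds (1 / π * (C * ∫ t : ℝ, (1 + |t|) ^ (-(2 - κ))) * x ^ (1 : ℝ))) :=
    ((Real.continuousAt_const_rpow hx.ne').tendsto.const_mul _).mono_left nhdsWithin_le_nhds
  rw [Real.rpow_one] at hlim
  refine ge_of_tendsto hlim ?_
  filter_upwards [Ioo_mem_nhdsGT (one_lt_two : (1 : ℝ) < 2)] with σ hσ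
  refine norm_sum_mul_one_sub_div_le_rpow hκ hx hσ.1.le (hc σ (by simpa using hσ.1)) fun t => ?_
  simpa using hbound (σ + t * Complex.I) (by simpa using hσ.1) (by simpa using hσ.2.le)

end RieszPerron

/-- The unnormalised Riesz mean `∑ c n * (x - n)` over `1 ≤ n ≤ x` of order one, which
smooths the partial sum `∑ c n` and is the quantity controlled by Perron's formula. -/
noncomputable def rieszSum (c : ℕ → ℝ) (x : ℝ) : ℝ :=
  ∑ n ∈ Finset.Ioc 0 ⌊x⌋₊, c n * (x - n)

section Desmoothing

variable {c : ℕ → ℝ} {x y h L B : ℝ}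

lemma mem_Ioc_floor_iff (hx : 0 ≤ x) (hxy : x ≤ y) {n : ℕ} :
    n ∈ Finset.Ioc ⌊x⌋₊ ⌊y⌋₊ ↔ x < n ∧ n ≤ y := by
  rw [Finset.mem_Ioc, Nat.floor_lt hx, Nat.le_floor_iff (hx.trans hxy)]

lemma neg_le_sum_Ioc_floor_mul {w : ℕ → ℝ} (hx : 0 ≤ x) (hxy : x ≤ y) (hL : 0 ≤ L)
    (hc : ∀ n : ℕ, x < n → n ≤ y → -L ≤ c n)
    (hw : ∀ n : ℕ, x < n → n ≤ y → 0 ≤ w n ∧ w n ≤ y - x) :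
    -((y - x + 1) * (L * (y - x))) ≤ ∑ n ∈ Finset.Ioc ⌊x⌋₊ ⌊y⌋₊, c n * w n := by
  have hcard : (⌊y⌋₊ : ℝ) - ⌊x⌋₊ ≤ y - x + 1 := by
    linarith [Nat.floor_le (hx.trans hxy), Nat.lt_floor_add_one x]
  have hterm (n : ℕ) (hn : n ∈ Finset.Ioc ⌊x⌋₊ ⌊y⌋₊) : -(L * (y - x)) ≤ c n * w n := by
    obtain ⟨hxn, hny⟩ := (mem_Ioc_floor_iff hx hxy).mp hn
    obtain ⟨hw0, hwh⟩ := hw n hxn hny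
    calc -(L * (y - x)) ≤ -(L * w n) := by gcongr
      _ = -L * w n := by ring
      _ ≤ c n * w n := by
          gcongr
          exact hc n hxn hny
  have hsum := Finset.card_nsmul_le_sum _ _ _ hterm
  rw [Nat.card_Ioc, nsmul_eq_mul, Nat.cast_sub (Nat.floor_mono hxy), mul_neg] at hsum
  refine le_trans (neg_le_neg ?_) hsum
  have := sub_nonneg.mpr hxy
  gcongr

lemma rieszSum_sub_rieszSum (hxy : x ≤ y) :
    rieszSum c y - rieszSum c x = (y - x) * ∑ n ∈ Finset.Ioc 0 ⌊x⌋₊, c n +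
      ∑ n ∈ Finset.Ioc ⌊x⌋₊ ⌊y⌋₊, c n * (y - n) := by
  rw [rieszSum, rieszSum, ← Finset.sum_Ioc_consecutive _ (Nat.zero_le _) (Nat.floor_mono hxy),
    add_sub_right_comm, ← Finset.sum_sub_distrib, Finset.mul_sum]
  congr 1
  exact Finset.sum_congr rfl fun n _ => by ring

lemma mul_sum_le_rieszSum_sub (hx : 0 ≤ x) (hxy : x ≤ y) (hL : 0 ≤ L)
    (hc : ∀ n : ℕ, x < n → n ≤ y → -L ≤ c n) :
    (y - x) * ∑ n ∈ Finset.Ioc 0 ⌊x⌋₊, c n ≤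
      rieszSum c y - rieszSum c x + (y - x + 1) * (L * (y - x)) := by
  have htail := neg_le_sum_Ioc_floor_mul (w := fun n => y - n) hx hxy hL hc
    fun n hxn hny => ⟨by linarith, by linarith⟩
  linarith [rieszSum_sub_rieszSum (c := c) hxy]

lemma rieszSum_sub_le_mul_sum (hx : 0 ≤ x) (hxy : x ≤ y) (hL : 0 ≤ L)
    (hc : ∀ n : ℕ, x < n → n ≤ y → -L ≤ c n) :
    rieszSum c y - rieszSum c x ≤
      (y - x) * ∑ n ∈ Finset.Ioc 0 ⌊y⌋₊, c n + (y - x + 1) * (L * (y - x)) := by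
  have htail := neg_le_sum_Ioc_floor_mul (w := fun n => n - x) hx hxy hL hc
    fun n hxn hny => ⟨by linarith, by linarith⟩
  have hcombine : ∑ n ∈ Finset.Ioc ⌊x⌋₊ ⌊y⌋₊, c n * (y - n) +
      ∑ n ∈ Finset.Ioc ⌊x⌋₊ ⌊y⌋₊, c n * (n - x) =
        (y - x) * ∑ n ∈ Finset.Ioc ⌊x⌋₊ ⌊y⌋₊, c n := by
    rw [← Finset.sum_add_distrib, Finset.mul_sum]
    exact Finset.sum_congr rfl fun n _ => by ring
  have hsplit := rieszSum_sub_rieszSum (c := c) hxy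
  rw [← Finset.sum_Ioc_consecutive _ (Nat.zero_le _) (Nat.floor_mono hxy), mul_add]
  linarith

lemma mul_abs_sum_le_of_abs_rieszSum_le (hh : 0 ≤ h) (hhx : h ≤ x) (hL : 0 ≤ L)
    (hc : ∀ n : ℕ, x - h < n → n ≤ x + h → -L ≤ c n)
    (hB : ∀ y ∈ Set.Icc (x - h) (x + h), |rieszSum c y| ≤ B) :
    h * |∑ n ∈ Finset.Ioc 0 ⌊x⌋₊, c n| ≤ 2 * B + (h + 1) * (L * h) := by
  have hupper := mul_sum_le_rieszSum_sub (x := x) (y := x + h) (by linarith) (by linarith) hL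
    fun n hn hn' => hc n (by linarith) hn'
  have hlower := rieszSum_sub_le_mul_sum (x := x - h) (y := x) (by linarith) (by linarith) hL
    fun n hn hn' => hc n hn (by linarith)
  rw [add_sub_cancel_left] at hupper
  rw [sub_sub_cancel] at hlower
  have hleft := abs_le.mp (hB (x - h) ⟨le_rfl, by linarith⟩)
  have hmid := abs_le.mp (hB x ⟨by linarith, by linarith⟩)
  have hright := abs_le.mp (hB (x + h) ⟨by linarith, le_rfl⟩)
  rw [← abs_of_nonneg hh, ← abs_mul, abs_of_nonneg hh, abs_le]
  constructor <;> linarith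

lemma rieszSum_eq_mul_sum (hx : x ≠ 0) :
    rieszSum c x = x * ∑ n ∈ Finset.Ioc 0 ⌊x⌋₊, c n * (1 - n / x) := by
  rw [rieszSum, Finset.mul_sum]
  exact Finset.sum_congr rfl fun n _ => by field_simp

-- The window has width `x / (1 + log x)`, which balances the Riesz means (of size `x²`)
-- against the loss `log² x` per term.
lemma abs_sum_le_of_abs_rieszSum_le {C : ℝ} (hc : ∀ n : ℕ, -Real.log n ^ 2 ≤ c n)
    (hC : ∀ y, 0 ≤ y → |rieszSum c y| ≤ C * y ^ 2) (hx : 1 ≤ x) :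
    |∑ n ∈ Finset.Ioc 0 ⌊x⌋₊, c n| ≤ (8 * C + 2) * (x * (1 + Real.log x)) := by
  have hC0 : 0 ≤ C := by simpa using (abs_nonneg _).trans (hC 1 zero_le_one)
  have hlog := Real.log_nonneg hx
  have hlogx := Real.log_le_sub_one_of_pos (zero_lt_one.trans_le hx)
  set ℓ := 1 + Real.log x
  have hℓ0 : 0 < ℓ := by linarith
  set h := x / ℓ
  have hhℓ : h * ℓ = x := div_mul_cancel₀ _ hℓ0.ne'
  have hh1 : 1 ≤ h := (one_le_div hℓ0).mpr (by linarith)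
  have hhx : h ≤ x := div_le_self (by linarith) (by linarith)
  have hcL (n : ℕ) (hn : x - h < n) (hn' : n ≤ x + h) : -ℓ ^ 2 ≤ c n := by
    have hn0 : (0 : ℝ) < n := by linarith
    have hlog_le : Real.log n ≤ ℓ := by
      calc Real.log n ≤ Real.log (2 * x) := Real.log_le_log hn0 (by linarith)
        _ = Real.log 2 + Real.log x := Real.log_mul two_ne_zero (by linarith)
        _ ≤ ℓ := by linarith [Real.log_two_lt_d9]
    have hlog_nonneg : 0 ≤ Real.log n := Real.log_natCast_nonneg n
    exact le_trans (by gcongr) (hc n)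
  have hB (y : ℝ) (hy : y ∈ Set.Icc (x - h) (x + h)) : |rieszSum c y| ≤ C * (2 * x) ^ 2 := by
    have hy0 : 0 ≤ y := by linarith [hy.1]
    refine (hC y hy0).trans ?_
    gcongr
    linarith [hy.2]
  refine le_of_mul_le_mul_left ?_ (zero_lt_one.trans_le hh1)
  calc h * |∑ n ∈ Finset.Ioc 0 ⌊x⌋₊, c n|
      ≤ 2 * (C * (2 * x) ^ 2) + (h + 1) * (ℓ ^ 2 * h) :=
        mul_abs_sum_le_of_abs_rieszSum_le (by linarith) hhx (sq_nonneg ℓ) hcL hB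
    _ ≤ 2 * (C * (2 * x) ^ 2) + (h + h) * (ℓ ^ 2 * h) := by gcongr
    _ = h * ((8 * C + 2) * (x * ℓ)) := by
        rw [← hhℓ]
        ring

end Desmoothing

lemma neg_log_sq_le_vonMangoldt_sub_one_mul_log_sq (n : ℕ) :
    -Real.log n ^ 2 ≤ (Λ n - 1) * Real.log n ^ 2 := by
  have := mul_nonneg (vonMangoldt_nonneg (n := n)) (sq_nonneg (Real.log n))
  linarith

lemma exists_abs_rieszSum_vonMangoldt_sub_one_mul_log_pow_le (k : ℕ) :
    ∃ C : ℝ, ∀ x : ℝ, 0 ≤ x →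
      |rieszSum (fun n => (Λ n - 1) * Real.log n ^ k) x| ≤ C * x ^ 2 := by
  obtain ⟨C, hC⟩ := exists_norm_LSeries_vonMangoldt_sub_one_mul_log_pow_le k
    (ε := 1 / 2) (by norm_num) (by norm_num)
  obtain ⟨C', hC'⟩ := exists_norm_sum_mul_one_sub_div_le (by norm_num)
    (fun s hs => LSeriesSummable_vonMangoldt_sub_one_mul_log_pow k hs) hC
  refine ⟨C', fun x hx => ?_⟩
  rcases hx.eq_or_lt with rfl | hx
  · simp [rieszSum]
  have hmean : |∑ n ∈ Finset.Ioc 0 ⌊x⌋₊, (Λ n - 1) * Real.log n ^ k * (1 - n / x)| ≤ C' * x := by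
    rw [← Real.norm_eq_abs, ← Complex.norm_real]
    exact_mod_cast hC' x hx
  rw [rieszSum_eq_mul_sum hx.ne', abs_mul, abs_of_pos hx]
  calc x * _ ≤ x * (C' * x) := by gcongr
    _ = C' * x ^ 2 := by ring

lemma exists_abs_sum_vonMangoldt_sub_one_mul_log_sq_le : ∃ C : ℝ, ∀ x : ℝ, 1 ≤ x →
    |∑ n ∈ Finset.Ioc 0 ⌊x⌋₊, (Λ n - 1) * Real.log n ^ 2| ≤ C * (x * (1 + Real.log x)) := by
  obtain ⟨C, hC⟩ := exists_abs_rieszSum_vonMangoldt_sub_one_mul_log_pow_le 2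
  exact ⟨8 * C + 2, fun x hx =>
    abs_sum_le_of_abs_rieszSum_le neg_log_sq_le_vonMangoldt_sub_one_mul_log_sq hC hx⟩

lemma sum_Icc_zero_eq_sum_Ioc {c : ℕ → ℝ} (hc : c 0 = 0) (n : ℕ) :
    ∑ k ∈ Finset.Icc 0 n, c k = ∑ k ∈ Finset.Ioc 0 n, c k := by
  rw [← Finset.add_sum_Ioc_eq_sum_Icc n.zero_le, hc, zero_add]

lemma hasDerivAt_inv_log {t : ℝ} (ht : 1 < t) :
    HasDerivAt (fun t : ℝ => (Real.log t)⁻¹) (-t⁻¹ / Real.log t ^ 2) t :=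
  (Real.hasDerivAt_log (by linarith)).inv (Real.log_pos ht).ne'

lemma continuousOn_neg_inv_div_log_sq :
    ContinuousOn (fun t : ℝ => -t⁻¹ / Real.log t ^ 2) (Set.Ioi 1) :=
  (continuousOn_inv₀.mono fun _ ht => (zero_lt_one.trans ht).ne').neg.div
    ((Real.continuousOn_log.mono fun _ ht => (zero_lt_one.trans ht).ne').pow 2)
    fun _ ht => pow_ne_zero 2 (Real.log_pos ht).ne'

lemma abs_sum_inv_log_mul_le {c : ℕ → ℝ} {C x : ℝ} (hc0 : c 0 = 0) (hc1 : c 1 = 0)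
    (hc : ∀ t : ℝ, 2 ≤ t → |∑ k ∈ Finset.Icc 0 ⌊t⌋₊, c k| ≤ C * (t * Real.log t))
    (hx : 2 ≤ x) :
    |∑ k ∈ Finset.Icc 0 ⌊x⌋₊, (Real.log k)⁻¹ * c k| ≤ (C + C / Real.log 2) * x := by
  have hderiv (t : ℝ) (ht : t ∈ Set.Icc 2 x) := hasDerivAt_inv_log (one_lt_two.trans_le ht.1)
  have hlog (t : ℝ) (ht : 2 ≤ t) : 0 < Real.log t := Real.log_pos (one_lt_two.trans_le ht)
  have hC : 0 ≤ C := nonneg_of_mul_nonneg_left ((abs_nonneg _).trans (hc 2 le_rfl))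
    (mul_pos two_pos (hlog 2 le_rfl))
  rw [sum_mul_eq_sub_integral_mul₁ c (f := fun t => (Real.log t)⁻¹) hc0 hc1 x
    (fun t ht => (hderiv t ht).differentiableAt)
    (((continuousOn_neg_inv_div_log_sq.mono fun t ht =>
      one_lt_two.trans_le ht.1).integrableOn_Icc).congr_fun
        (fun t ht => (hderiv t ht).deriv.symm) measurableSet_Icc)]
  have hboundary : |(Real.log x)⁻¹ * ∑ k ∈ Finset.Icc 0 ⌊x⌋₊, c k| ≤ C * x := by
    rw [abs_mul, abs_of_pos (inv_pos.mpr (hlog x hx)), inv_mul_le_iff₀ (hlog x hx)]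
    exact (hc x hx).trans_eq (by ring)
  have hintegrand (t : ℝ) (ht : t ∈ Set.Ioc 2 x) :
      ‖deriv (fun t : ℝ => (Real.log t)⁻¹) t * ∑ k ∈ Finset.Icc 0 ⌊t⌋₊, c k‖ ≤
        C / Real.log 2 := by
    have ht0 : 0 < t := by linarith [ht.1]
    have hlogt := hlog t ht.1.le
    rw [(hderiv t ⟨ht.1.le, ht.2⟩).deriv, norm_mul, norm_div, norm_neg,
      Real.norm_of_nonneg (inv_nonneg.mpr ht0.le), Real.norm_of_nonneg (sq_nonneg _)]
    calc _ ≤ t⁻¹ / Real.log t ^ 2 * (C * (t * Real.log t)) := by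
          gcongr
          exact hc t ht.1.le
      _ = C / Real.log t := by field_simp
      _ ≤ C / Real.log 2 := by
          have := hlog 2 le_rfl
          gcongr
          exact ht.1.le
  have hintegral := norm_setIntegral_le_of_norm_le_const (μ := volume) (by simp) hintegrand
  rw [Real.volume_real_Ioc_of_le hx] at hintegral
  calc _ ≤ C * x + C / Real.log 2 * (x - 2) :=
        (abs_sub _ _).trans (add_le_add hboundary hintegral)
    _ ≤ (C + C / Real.log 2) * x := by
        have := div_nonneg hC (hlog 2 le_rfl).le
        linarith

lemma exists_abs_sum_vonMangoldt_sub_one_mul_log_le : ∃ C : ℝ, ∀ x : ℝ, 2 ≤ x →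
    |∑ n ∈ Finset.Ioc 0 ⌊x⌋₊, (Λ n - 1) * Real.log n| ≤ C * x := by
  obtain ⟨C, hC⟩ := exists_abs_sum_vonMangoldt_sub_one_mul_log_sq_le
  have hlog2 : 0 < Real.log 2 := Real.log_pos one_lt_two
  have hC0 : 0 ≤ C := by simpa using (abs_nonneg _).trans (hC 1 le_rfl)
  have hbound (t : ℝ) (ht : 2 ≤ t) :
      |∑ n ∈ Finset.Icc 0 ⌊t⌋₊, (Λ n - 1) * Real.log n ^ 2| ≤
        C * (1 / Real.log 2 + 1) * (t * Real.log t) := by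
    have hlog : 1 ≤ 1 / Real.log 2 * Real.log t := by
      rw [one_div_mul_eq_div, one_le_div hlog2]
      exact Real.log_le_log two_pos ht
    rw [sum_Icc_zero_eq_sum_Ioc (by simp)]
    calc _ ≤ C * (t * (1 + Real.log t)) := hC t (by linarith)
      _ ≤ C * (t * (1 / Real.log 2 * Real.log t + Real.log t)) := by gcongr
      _ = C * (1 / Real.log 2 + 1) * (t * Real.log t) := by ring
  refine ⟨_, fun x hx => le_of_eq_of_le ?_
    (abs_sum_inv_log_mul_le (by simp) (by simp) hbound hx)⟩
  rw [sum_Icc_zero_eq_sum_Ioc (by simp)]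
  congr 1
  refine Finset.sum_congr rfl fun n _ => ?_
  rcases eq_or_ne (Real.log n) 0 with hn | hn
  · simp [hn]
  · field_simp

lemma sum_Ioc_zero_log (N : ℕ) :
    ∑ n ∈ Finset.Ioc 0 N, Real.log n = Real.log N.factorial := by
  rw [← Finset.prod_Ico_id_eq_factorial, Nat.cast_prod, Real.log_prod]
  · rfl
  · exact fun n hn => Nat.cast_ne_zero.mpr (Nat.pos_iff_ne_zero.mp (Finset.mem_Ico.mp hn).1)

lemma log_factorial_le_mul_log (N : ℕ) : Real.log N.factorial ≤ N * Real.log N := by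
  rw [← Real.log_pow]
  exact Real.log_le_log (by positivity) (mod_cast N.factorial_le_pow)

lemma mul_log_sub_le_log_factorial {N : ℕ} (hN : N ≠ 0) :
    N * Real.log N - N ≤ Real.log N.factorial := by
  have h := Real.log_le_log (by positivity) (Real.pow_div_factorial_le_exp (N : ℝ) N.cast_nonneg N)
  rw [Real.log_exp, Real.log_div (by positivity) (by positivity), Real.log_pow] at h
  linarith

lemma mul_log_sub_floor_mul_log_floor_le {x : ℝ} (hx : 1 ≤ x) :
    x * Real.log x - ⌊x⌋₊ * Real.log ⌊x⌋₊ ≤ 1 + Real.log x := by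
  have hN : (0 : ℝ) < ⌊x⌋₊ := Nat.cast_pos.mpr (Nat.floor_pos.mpr hx)
  have hxN := (Nat.lt_floor_add_one x).le
  have hratio : ⌊x⌋₊ * (Real.log x - Real.log ⌊x⌋₊) ≤ x - ⌊x⌋₊ := by
    rw [← Real.log_div (by linarith) hN.ne']
    calc ⌊x⌋₊ * Real.log (x / ⌊x⌋₊) ≤ ⌊x⌋₊ * (x / ⌊x⌋₊ - 1) := by
          gcongr
          exact Real.log_le_sub_one_of_pos (by positivity)
      _ = x - ⌊x⌋₊ := by field_simp
  have hfract : (x - ⌊x⌋₊) * Real.log x ≤ 1 * Real.log x := by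
    have := Real.log_nonneg hx
    gcongr
    linarith
  linarith

lemma abs_sum_log_sub_mul_log_le {x : ℝ} (hx : 1 ≤ x) :
    |∑ n ∈ Finset.Ioc 0 ⌊x⌋₊, Real.log n - x * Real.log x| ≤ 2 * x := by
  have hN := Nat.floor_pos.mpr hx
  have hNx := Nat.floor_le (zero_le_one.trans hx)
  have hlower := mul_log_sub_le_log_factorial hN.ne'
  have hfloor := mul_log_sub_floor_mul_log_floor_le hx
  have hlogx := Real.log_le_sub_one_of_pos (zero_lt_one.trans_le hx)
  have hupper : Real.log ⌊x⌋₊.factorial ≤ x * Real.log x := by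
    refine (log_factorial_le_mul_log _).trans ?_
    have := Real.log_natCast_nonneg ⌊x⌋₊
    gcongr
  rw [sum_Ioc_zero_log, abs_le]
  constructor <;> linarith

lemma sum_vonMangoldt_mul_log_sub_le {x : ℝ} (hx : 1 ≤ x) :
    ∑ n ∈ Finset.Ioc 0 ⌊x⌋₊, Λ n * (Real.log n - Λ n) ≤
      (Chebyshev.psi x - Chebyshev.theta x) * Real.log x := by
  rw [Chebyshev.psi_sub_theta_eq_sum_not_prime, Finset.sum_mul, Finset.sum_filter]
  refine Finset.sum_le_sum fun n hn => ?_
  obtain ⟨hn0, hnx⟩ := Finset.mem_Ioc.mp hn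
  split_ifs with hp
  · rw [vonMangoldt_apply_prime hp, sub_self, mul_zero]
  · have hlog : Real.log n ≤ Real.log x :=
      Real.log_le_log (mod_cast hn0) ((Nat.le_floor_iff (by linarith)).mp hnx)
    gcongr
    linarith [vonMangoldt_nonneg (n := n)]

lemma exists_sum_vonMangoldt_mul_log_sub_le : ∃ C : ℝ, ∀ x : ℝ, 1 ≤ x →
    ∑ n ∈ Finset.Ioc 0 ⌊x⌋₊, Λ n * (Real.log n - Λ n) ≤ C * x := by
  obtain ⟨C, hC⟩ := Chebyshev.psi_sub_theta_le_mul_sqrt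
  have hC0 : 0 ≤ C := by
    simpa using (sub_nonneg.mpr (Chebyshev.theta_le_psi 1)).trans (hC 1)
  refine ⟨C * 2, fun x hx => ?_⟩
  have hlog : Real.log x ≤ 2 * √x := by
    have := Real.log_le_rpow_div (zero_le_one.trans hx) one_half_pos
    rw [Real.sqrt_eq_rpow]
    linarith
  calc _ ≤ (Chebyshev.psi x - Chebyshev.theta x) * Real.log x := sum_vonMangoldt_mul_log_sub_le hx
    _ ≤ C * √x * (2 * √x) := by
        have := Real.log_nonneg hx
        gcongr
        exact hC x
    _ = C * 2 * (√x * √x) := by ring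
    _ = C * 2 * x := by rw [Real.mul_self_sqrt (zero_le_one.trans hx)]

lemma exists_abs_sum_vonMangoldt_sq_sub_mul_log_le : ∃ C : ℝ, ∀ x : ℝ, 2 ≤ x →
    |∑ n ∈ Finset.Ioc 0 ⌊x⌋₊, Λ n ^ 2 - x * Real.log x| ≤ C * x := by
  obtain ⟨C, hC⟩ := exists_abs_sum_vonMangoldt_sub_one_mul_log_le
  obtain ⟨C', hC'⟩ := exists_sum_vonMangoldt_mul_log_sub_le
  refine ⟨C + 2 + C', fun x hx => ?_⟩
  have hmain := abs_le.mp (hC x hx)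
  have hlog := abs_le.mp (abs_sum_log_sub_mul_log_le (x := x) (by linarith))
  have hpowers := hC' x (by linarith)
  have hpowers0 : 0 ≤ ∑ n ∈ Finset.Ioc 0 ⌊x⌋₊, Λ n * (Real.log n - Λ n) :=
    Finset.sum_nonneg fun n _ => mul_nonneg vonMangoldt_nonneg (sub_nonneg.mpr vonMangoldt_le_log)
  have hdecomp : ∑ n ∈ Finset.Ioc 0 ⌊x⌋₊, Λ n ^ 2 =
      ∑ n ∈ Finset.Ioc 0 ⌊x⌋₊, (Λ n - 1) * Real.log n +
        ∑ n ∈ Finset.Ioc 0 ⌊x⌋₊, Real.log n -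
          ∑ n ∈ Finset.Ioc 0 ⌊x⌋₊, Λ n * (Real.log n - Λ n) := by
    rw [← Finset.sum_add_distrib, ← Finset.sum_sub_distrib]
    exact Finset.sum_congr rfl fun n _ => by ring
  rw [hdecomp, abs_le]
  constructor <;> linarith

section PartialSummation

variable {c : ℕ → ℝ} {f f' P p : ℝ → ℝ} {x y : ℝ}

/-- The error made in approximating the partial sums of `c` by the smooth function `P`. -/
noncomputable def partialSumError (c : ℕ → ℝ) (P : ℝ → ℝ) (t : ℝ) : ℝ :=
  ∑ k ∈ Finset.Icc 0 ⌊t⌋₊, c k - P t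

lemma measurable_partialSumError (hP : Measurable P) : Measurable (partialSumError c P) :=
  Measurable.sub ((measurable_from_nat (f := fun N => ∑ k ∈ Finset.Icc 0 N, c k)).comp
    Nat.measurable_floor) hP

lemma integrableOn_mul_partialSumError (hx : 0 ≤ x) (hf' : ContinuousOn f' (Set.Icc x y))
    (hP : ContinuousOn P (Set.Icc x y)) :
    IntegrableOn (fun t => f' t * partialSumError c P t) (Set.Icc x y) := by
  simp only [partialSumError, mul_sub]
  exact (integrableOn_mul_sum_Icc c hx hf'.integrableOn_Icc).sub (hf'.mul hP).integrableOn_Icc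

lemma sum_mul_eq_integral_add_partialSumError (hx : 0 ≤ x) (hxy : x ≤ y)
    (hf : ∀ t ∈ Set.Icc x y, HasDerivAt f (f' t) t) (hf' : ContinuousOn f' (Set.Icc x y))
    (hP : ∀ t ∈ Set.Icc x y, HasDerivAt P (p t) t) (hp : ContinuousOn p (Set.Icc x y)) :
    ∑ k ∈ Finset.Ioc ⌊x⌋₊ ⌊y⌋₊, f k * c k =
      (∫ t in x..y, f t * p t) + f y * partialSumError c P y - f x * partialSumError c P x -
        ∫ t in x..y, f' t * partialSumError c P t := by
  have hPcont : ContinuousOn P (Set.Icc x y) := fun t ht =>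
    (hP t ht).continuousAt.continuousWithinAt
  have hint := (intervalIntegrable_iff_integrableOn_Icc_of_le hxy).mpr
    (integrableOn_mul_partialSumError (c := c) hx hf' hPcont)
  have hintP : IntervalIntegrable (fun t => f' t * P t) volume x y :=
    (hf'.mul hPcont).intervalIntegrable_of_Icc hxy
  have habel := sum_mul_eq_sub_sub_integral_mul c hx hxy
    (fun t ht => (hf t ht).differentiableAt)
    (hf'.integrableOn_Icc.congr_fun (fun t ht => (hf t ht).deriv.symm) measurableSet_Icc)
  have hsplit : ∫ t in Set.Ioc x y, deriv f t * ∑ k ∈ Finset.Icc 0 ⌊t⌋₊, c k =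
      (∫ t in x..y, f' t * partialSumError c P t) + ∫ t in x..y, f' t * P t := by
    rw [← intervalIntegral.integral_add hint hintP, intervalIntegral.integral_of_le hxy]
    refine setIntegral_congr_fun measurableSet_Ioc fun t ht => ?_
    simp only [(hf t ⟨ht.1.le, ht.2⟩).deriv, partialSumError]
    ring
  have hparts : ∫ t in x..y, f t * p t = f y * P y - f x * P x - ∫ t in x..y, f' t * P t := by
    rw [← Set.uIcc_of_le hxy] at hf hP hf' hp
    exact intervalIntegral.integral_mul_deriv_eq_deriv_mul hf hP hf'.intervalIntegrable
      hp.intervalIntegrable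
  rw [habel, hsplit, hparts, partialSumError, partialSumError]
  ring

lemma hasSum_tail_of_tendsto_partialSumError (hx : 0 ≤ x)
    (hf0 : ∀ n : ℕ, x < n → 0 ≤ f n * c n)
    (hf : ∀ t ∈ Set.Ici x, HasDerivAt f (f' t) t) (hf' : ContinuousOn f' (Set.Ici x))
    (hP : ∀ t ∈ Set.Ici x, HasDerivAt P (p t) t) (hp : ContinuousOn p (Set.Ici x))
    (hfp : IntegrableOn (fun t => f t * p t) (Set.Ioi x))
    (hfE : IntegrableOn (fun t => f' t * partialSumError c P t) (Set.Ioi x))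
    (hlim : Tendsto (fun t => f t * partialSumError c P t) atTop (nhds 0)) :
    HasSum (fun n : ℕ => if x < n then f n * c n else 0)
      ((∫ t in Set.Ioi x, f t * p t) - f x * partialSumError c P x -
        ∫ t in Set.Ioi x, f' t * partialSumError c P t) := by
  rw [← add_zero (∫ t in Set.Ioi x, f t * p t), hasSum_iff_tendsto_nat_of_nonneg,
    ← tendsto_add_atTop_iff_nat 1]
  · have hcast : Tendsto (Nat.cast : ℕ → ℝ) atTop atTop := tendsto_natCast_atTop_atTop
    refine Tendsto.congr' ?_ ((((intervalIntegral_tendsto_integral_Ioi x hfp hcast).add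
      (hlim.comp hcast)).sub_const _).sub (intervalIntegral_tendsto_integral_Ioi x hfE hcast))
    filter_upwards [eventually_ge_atTop ⌈x⌉₊] with N hN
    have hIcc : Set.Icc x N ⊆ Set.Ici x := Set.Icc_subset_Ici_self
    rw [Function.comp_apply, ← sum_mul_eq_integral_add_partialSumError hx (Nat.ceil_le.mp hN)
      (fun t ht => hf t (hIcc ht)) (hf'.mono hIcc) (fun t ht => hP t (hIcc ht)) (hp.mono hIcc),
      ← Finset.sum_filter, Nat.floor_natCast]
    refine Finset.sum_congr ?_ fun _ _ => rfl
    ext n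
    simp only [Finset.mem_Ioc, Finset.mem_filter, Finset.mem_range, Nat.floor_lt hx,
      Nat.lt_succ_iff, and_comm]
  · intro n
    split_ifs with hn
    exacts [hf0 n hn, le_rfl]

end PartialSummation

/-- The weight `t ↦ t ^ (-a) * log (t / x) ^ b` attached to `t > x` in the tail sum. Writing the
logarithm of `t / x` instead of `x / t` makes it nonnegative. -/
noncomputable def tailWeight (a : ℝ) (b : ℕ) (x t : ℝ) : ℝ :=
  t ^ (-a) * Real.log (t / x) ^ b

section TailWeight

variable {a x t : ℝ} {b : ℕ}

lemma tailWeight_nonneg (hx : 0 < x) (hxt : x ≤ t) : 0 ≤ tailWeight a b x t :=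
  mul_nonneg (Real.rpow_nonneg (hx.le.trans hxt) _)
    (pow_nonneg (Real.log_nonneg ((one_le_div hx).mpr hxt)) b)

lemma tailWeight_self_le (hx : 0 < x) : tailWeight a b x x ≤ x ^ (-a) := by
  rw [tailWeight, div_self hx.ne', Real.log_one]
  exact mul_le_of_le_one_right (by positivity) (pow_le_one₀ le_rfl zero_le_one)

lemma tailWeight_mul_left (hx : 0 < x) (ht : 0 ≤ t) :
    tailWeight a b x (x * t) = x ^ (-a) * tailWeight a b 1 t := by
  rw [tailWeight, tailWeight, mul_div_cancel_left₀ _ hx.ne', div_one, Real.mul_rpow hx.le ht,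
    mul_assoc]

lemma tailWeight_mul_log (hx : 0 < x) (ht : 0 < t) :
    tailWeight a b x t * (Real.log t + 1) =
      (Real.log x + 1) * tailWeight a b x t + tailWeight a (b + 1) x t := by
  simp only [tailWeight, Real.log_div ht.ne' hx.ne']
  ring

lemma hasDerivAt_tailWeight (hx : 0 < x) (ht : 0 < t) :
    HasDerivAt (tailWeight a b x)
      (t⁻¹ * (-a * tailWeight a b x t + b * tailWeight a (b - 1) x t)) t := by
  have hlog : HasDerivAt (fun t => Real.log (t / x)) (1 / x / (t / x)) t :=
    ((hasDerivAt_id t).div_const x).log (div_pos ht hx).ne'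
  refine ((Real.hasDerivAt_rpow_const (.inl ht.ne')).mul (hlog.pow b)).congr_deriv ?_
  rw [tailWeight, tailWeight, Real.rpow_sub_one ht.ne', Pi.pow_apply]
  field_simp

lemma continuousOn_tailWeight (hx : 0 < x) : ContinuousOn (tailWeight a b x) (Set.Ici x) :=
  fun _ ht => (hasDerivAt_tailWeight hx (hx.trans_le ht)).continuousAt.continuousWithinAt

-- The substitution `u = log t` turns the weight into the integrand of Euler's `Γ`.
lemma tailWeight_one_eq (ht : 0 < t) :
    tailWeight a b 1 t = t⁻¹ * (Real.log t ^ b * rexp (-((a - 1) * Real.log t))) := by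
  rw [tailWeight, div_one, Real.rpow_def_of_pos ht, ← Real.exp_log (inv_pos.mpr ht), Real.log_inv,
    mul_left_comm, ← Real.exp_add, mul_comm]
  ring_nf

lemma integrableOn_tailWeight_one (ha : 1 < a) : IntegrableOn (tailWeight a b 1) (Set.Ioi 1) := by
  refine IntegrableOn.congr_fun ?_ (fun t ht => (tailWeight_one_eq (zero_lt_one.trans ht)).symm)
    measurableSet_Ioi
  refine (integrableOn_comp_log_Ioi (fun u => u ^ b * rexp (-((a - 1) * u))) one_pos).mpr ?_
  have hb : (-1 : ℝ) < b := neg_one_lt_zero.trans_le b.cast_nonneg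
  simpa only [Real.rpow_natCast, Real.rpow_one, neg_mul, Real.log_one] using
    integrableOn_rpow_mul_exp_neg_mul_rpow hb one_pos (sub_pos.mpr ha)

lemma integral_tailWeight_one (ha : 1 < a) :
    ∫ t in Set.Ioi 1, tailWeight a b 1 t = b.factorial / (a - 1) ^ (b + 1) := by
  rw [setIntegral_congr_fun measurableSet_Ioi fun t ht => tailWeight_one_eq (zero_lt_one.trans ht)]
  refine (integral_comp_log_Ioi (fun u => u ^ b * rexp (-((a - 1) * u))) one_pos).trans ?_
  have hgamma := integral_rpow_mul_exp_neg_mul_Ioi (a := b + 1) (by positivity) (sub_pos.mpr ha)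
  rw [Real.Gamma_nat_eq_factorial, add_sub_cancel_right] at hgamma
  simp only [Real.rpow_natCast] at hgamma
  rw [Real.log_one, hgamma, ← Nat.cast_add_one, Real.rpow_natCast, one_div_pow]
  ring

lemma integrableOn_tailWeight (ha : 1 < a) (hx : 0 < x) :
    IntegrableOn (tailWeight a b x) (Set.Ioi x) := by
  rw [← mul_one x, ← integrableOn_Ioi_comp_mul_left_iff _ _ hx, mul_one]
  exact IntegrableOn.congr_fun ((integrableOn_tailWeight_one ha).const_mul (x ^ (-a)))
    (fun t ht => (tailWeight_mul_left hx (zero_le_one.trans ht.le)).symm) measurableSet_Ioi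

lemma integral_tailWeight (ha : 1 < a) (hx : 0 < x) :
    ∫ t in Set.Ioi x, tailWeight a b x t = b.factorial / (a - 1) ^ (b + 1) * x ^ (1 - a) := by
  have hscale := integral_comp_mul_left_Ioi' (tailWeight a b x) 1 hx
  rw [mul_one, setIntegral_congr_fun measurableSet_Ioi fun t ht =>
    tailWeight_mul_left hx (zero_le_one.trans (Set.mem_Ioi.mp ht).le), integral_const_mul,
    integral_tailWeight_one ha] at hscale
  rw [← hscale, show 1 - a = -a + 1 by ring, Real.rpow_add_one hx.ne', smul_eq_mul]
  ring

lemma tendsto_mul_tailWeight (ha : 1 < a) (hx : 0 < x) :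
    Tendsto (fun t => t * tailWeight a b x t) atTop (nhds 0) := by
  have hexp : Tendsto (fun u : ℝ => u ^ b * rexp (-(a - 1) * u)) atTop (nhds 0) := by
    simpa using tendsto_rpow_mul_exp_neg_mul_atTop_nhds_zero b (a - 1) (sub_pos.mpr ha)
  have hlog : Tendsto (fun t => Real.log (t / x)) atTop atTop :=
    Real.tendsto_log_atTop.comp (tendsto_id.atTop_div_const hx)
  have hlim := (hexp.comp hlog).const_mul (x * x ^ (-a))
  rw [mul_zero] at hlim
  refine hlim.congr' ?_
  filter_upwards [eventually_gt_atTop 0] with t ht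
  have htx := div_pos ht hx
  nth_rw 3 [← mul_div_cancel₀ t hx.ne']
  rw [tailWeight_mul_left hx htx.le, tailWeight_one_eq htx, Function.comp_apply, neg_mul]
  field_simp

end TailWeight

section TailSum

variable {a C x t e : ℝ} {b : ℕ} {c : ℕ → ℝ} {E : ℝ → ℝ}

lemma abs_deriv_tailWeight_mul_le (ha : 0 ≤ a) (hx : 0 < x) (hxt : x ≤ t) (he : |e| ≤ C * t) :
    |t⁻¹ * (-a * tailWeight a b x t + b * tailWeight a (b - 1) x t) * e| ≤
      C * (a * tailWeight a b x t + b * tailWeight a (b - 1) x t) := by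
  have ht : 0 < t := hx.trans_le hxt
  have hw : 0 ≤ a * tailWeight a b x t := mul_nonneg ha (tailWeight_nonneg hx hxt)
  have hw' : 0 ≤ b * tailWeight a (b - 1) x t := mul_nonneg b.cast_nonneg (tailWeight_nonneg hx hxt)
  calc _ = t⁻¹ * |-(a * tailWeight a b x t) + b * tailWeight a (b - 1) x t| * |e| := by
        rw [abs_mul, abs_mul, abs_of_pos (inv_pos.mpr ht), neg_mul]
    _ ≤ t⁻¹ * (a * tailWeight a b x t + b * tailWeight a (b - 1) x t) * (C * t) := by
        gcongr
        exact abs_le.mpr ⟨by linarith, by linarith⟩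
    _ = C * (a * tailWeight a b x t + b * tailWeight a (b - 1) x t) := by field_simp

lemma integrableOn_deriv_tailWeight_mul (ha : 1 < a) (hx : 0 < x) (hmeas : Measurable E)
    (hE : ∀ t, x ≤ t → |E t| ≤ C * t) :
    IntegrableOn
      (fun t => t⁻¹ * (-a * tailWeight a b x t + b * tailWeight a (b - 1) x t) * E t)
      (Set.Ioi x) := by
  have hw : Measurable (tailWeight a b x) := by unfold tailWeight; fun_prop
  have hw' : Measurable (tailWeight a (b - 1) x) := by unfold tailWeight; fun_prop
  refine Integrable.mono' ((((integrableOn_tailWeight ha hx (b := b)).const_mul a).add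
    ((integrableOn_tailWeight ha hx (b := b - 1)).const_mul (b : ℝ))).const_mul C) (by fun_prop) ?_
  filter_upwards [ae_restrict_mem measurableSet_Ioi] with t ht
  exact abs_deriv_tailWeight_mul_le (zero_le_one.trans ha.le) hx (le_of_lt ht) (hE t (le_of_lt ht))

lemma abs_integral_deriv_tailWeight_mul_le (ha : 1 < a) (hx : 0 < x)
    (hE : ∀ t, x ≤ t → |E t| ≤ C * t) :
    |∫ t in Set.Ioi x, t⁻¹ * (-a * tailWeight a b x t + b * tailWeight a (b - 1) x t) * E t| ≤
      C * (a * (∫ t in Set.Ioi x, tailWeight a b x t) +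
        b * ∫ t in Set.Ioi x, tailWeight a (b - 1) x t) := by
  have hb := (integrableOn_tailWeight ha hx (b := b)).const_mul a
  have hb' := (integrableOn_tailWeight ha hx (b := b - 1)).const_mul (b : ℝ)
  rw [← integral_const_mul, ← integral_const_mul, ← integral_add hb hb', ← integral_const_mul]
  rw [← Real.norm_eq_abs]
  refine norm_integral_le_of_norm_le ((hb.add hb').const_mul C) ?_
  filter_upwards [ae_restrict_mem measurableSet_Ioi] with t ht
  exact abs_deriv_tailWeight_mul_le (zero_le_one.trans ha.le) hx (le_of_lt ht) (hE t (le_of_lt ht))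

lemma tendsto_tailWeight_mul (ha : 1 < a) (hx : 0 < x) (hE : ∀ t, x ≤ t → |E t| ≤ C * t) :
    Tendsto (fun t => tailWeight a b x t * E t) atTop (nhds 0) := by
  have hlim := (tendsto_mul_tailWeight (b := b) ha hx).const_mul C
  rw [mul_zero] at hlim
  refine squeeze_zero_norm' ?_ hlim
  filter_upwards [eventually_ge_atTop x] with t ht
  have hw := tailWeight_nonneg (a := a) (b := b) hx ht
  rw [norm_mul, Real.norm_of_nonneg hw, mul_left_comm, ← mul_assoc, mul_comm (t * C), mul_comm t]
  exact mul_le_mul_of_nonneg_left (hE t ht) hw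

lemma integrableOn_tailWeight_mul_log (ha : 1 < a) (hx : 0 < x) :
    IntegrableOn (fun t => tailWeight a b x t * (Real.log t + 1)) (Set.Ioi x) :=
  IntegrableOn.congr_fun
    (((integrableOn_tailWeight ha hx).const_mul (Real.log x + 1)).add
      (integrableOn_tailWeight ha hx))
    (fun _ ht => (tailWeight_mul_log hx (hx.trans ht)).symm) measurableSet_Ioi

lemma integral_tailWeight_mul_log (ha : 1 < a) (hx : 0 < x) :
    ∫ t in Set.Ioi x, tailWeight a b x t * (Real.log t + 1) =
      (Real.log x + 1) * (∫ t in Set.Ioi x, tailWeight a b x t) +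
        ∫ t in Set.Ioi x, tailWeight a (b + 1) x t := by
  rw [setIntegral_congr_fun measurableSet_Ioi fun t ht => tailWeight_mul_log hx (hx.trans ht),
    integral_add ((integrableOn_tailWeight ha hx).const_mul _) (integrableOn_tailWeight ha hx),
    integral_const_mul]

lemma hasSum_tailWeight_mul (ha : 1 < a) (hx : 0 < x) (hc : ∀ n, 0 ≤ c n)
    (hE : ∀ t, x ≤ t → |partialSumError c (fun t => t * Real.log t) t| ≤ C * t) :
    HasSum (fun n : ℕ => if x < n then tailWeight a b x n * c n else 0)
      ((∫ t in Set.Ioi x, tailWeight a b x t * (Real.log t + 1)) -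
        tailWeight a b x x * partialSumError c (fun t => t * Real.log t) x -
        ∫ t in Set.Ioi x, t⁻¹ * (-a * tailWeight a b x t + b * tailWeight a (b - 1) x t) *
          partialSumError c (fun t => t * Real.log t) t) := by
  have hpos : ∀ t ∈ Set.Ici x, 0 < t := fun t ht => hx.trans_le ht
  have hlog : ContinuousOn Real.log (Set.Ici x) :=
    Real.continuousOn_log.mono fun t ht => (hpos t ht).ne'
  have hinv : ContinuousOn (fun t : ℝ => t⁻¹) (Set.Ici x) :=
    continuousOn_inv₀.mono fun t ht => (hpos t ht).ne'
  exact hasSum_tail_of_tendsto_partialSumError hx.le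
    (fun n hn => mul_nonneg (tailWeight_nonneg hx hn.le) (hc n))
    (fun t ht => hasDerivAt_tailWeight hx (hpos t ht))
    (hinv.mul (((continuousOn_tailWeight hx).const_mul _).add
      ((continuousOn_tailWeight hx).const_mul _)))
    (fun t ht => Real.hasDerivAt_mul_log (hpos t ht).ne') (hlog.add continuousOn_const)
    (integrableOn_tailWeight_mul_log ha hx)
    (integrableOn_deriv_tailWeight_mul ha hx
      (measurable_partialSumError (measurable_id.mul Real.measurable_log)) hE)
    (tendsto_tailWeight_mul ha hx hE)

lemma exists_abs_tsum_tailWeight_mul_sub_le (ha : 1 < a) (b : ℕ) (hc : ∀ n, 0 ≤ c n)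
    (hE : ∀ t, 2 ≤ t → |partialSumError c (fun t => t * Real.log t) t| ≤ C * t) :
    ∃ K : ℝ, ∀ x : ℝ, 2 ≤ x →
      |∑' n : ℕ, (if x < n then tailWeight a b x n * c n else 0) -
        b.factorial / (a - 1) ^ (b + 1) * x ^ (1 - a) * Real.log x| ≤ K * x ^ (1 - a) := by
  set I : ℕ → ℝ := fun b => b.factorial / (a - 1) ^ (b + 1)
  refine ⟨I b + I (b + 1) + C + C * (a * I b + b * I (b - 1)), fun x hx => ?_⟩
  have hx0 : 0 < x := two_pos.trans_le hx
  have hEx : ∀ t, x ≤ t → |partialSumError c (fun t => t * Real.log t) t| ≤ C * t :=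
    fun t ht => hE t (hx.trans ht)
  have hint (k : ℕ) : ∫ t in Set.Ioi x, tailWeight a k x t = I k * x ^ (1 - a) :=
    integral_tailWeight ha hx0
  have hI (k : ℕ) : 0 ≤ I k * x ^ (1 - a) := by
    have := sub_pos.mpr ha
    positivity
  have hend : |tailWeight a b x x * partialSumError c (fun t => t * Real.log t) x| ≤
      C * x ^ (1 - a) := by
    rw [abs_mul, abs_of_nonneg (tailWeight_nonneg hx0 le_rfl)]
    calc _ ≤ x ^ (-a) * (C * x) := by grw [tailWeight_self_le hx0, hEx x le_rfl]
      _ = C * x ^ (1 - a) := by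
        rw [show 1 - a = -a + 1 by ring, Real.rpow_add_one hx0.ne']
        ring
  have herr := abs_integral_deriv_tailWeight_mul_le (b := b) ha hx0 hEx
  rw [hint, hint] at herr
  rw [(hasSum_tailWeight_mul ha hx0 hc hEx).tsum_eq, integral_tailWeight_mul_log ha hx0, hint, hint]
  have := hI b
  have := hI (b + 1)
  rw [abs_le] at hend herr ⊢
  constructor <;> linarith

end TailSum

lemma exists_abs_tsum_vonMangoldt_sq_sub_le {a : ℝ} (ha : 1 < a) (b : ℕ) :
    ∃ K : ℝ, ∀ x : ℝ, 2 ≤ x →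
      |∑' n : ℕ, (if x < n then tailWeight a b x n * Λ n ^ 2 else 0) -
        b.factorial / (a - 1) ^ (b + 1) * x ^ (1 - a) * Real.log x| ≤ K * x ^ (1 - a) := by
  obtain ⟨C, hC⟩ := exists_abs_sum_vonMangoldt_sq_sub_mul_log_le
  refine exists_abs_tsum_tailWeight_mul_sub_le (C := C) ha b (fun n => sq_nonneg (Λ n))
    fun t ht => ?_
  rw [partialSumError, sum_Icc_zero_eq_sum_Ioc (by simp)]
  exact hC t ht

theorem vonMangoldt_sq_weighted_tail_asymp (a : ℝ) (ha : 1 < a) (b : ℕ) :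
    (fun x : ℝ =>
        (∑' n : ℕ, if x < (n : ℝ) then (Λ n) ^ 2 * (n : ℝ) ^ (-a) * (Real.log (x / n)) ^ b else 0) -
          (-1 : ℝ) ^ b * (b.factorial : ℝ) * x ^ (1 - a) * Real.log x / (a - 1) ^ (b + 1))
      =O[atTop]
    (fun x : ℝ =>
      ((b.factorial : ℝ) * x ^ (1 - a) * Real.log x / (a - 1) ^ (b + 1)) / Real.log x) := by
  obtain ⟨K, hK⟩ := exists_abs_tsum_vonMangoldt_sq_sub_le ha b
  have ha1 : 0 < a - 1 := sub_pos.mpr ha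
  refine Asymptotics.IsBigO.of_bound (K * ((a - 1) ^ (b + 1) / b.factorial)) ?_
  filter_upwards [eventually_ge_atTop 2] with x hx
  have hx0 : 0 < x := two_pos.trans_le hx
  have hlog : 0 < Real.log x := Real.log_pos (one_lt_two.trans_le hx)
  have hsign : (∑' n : ℕ, if x < n then Λ n ^ 2 * (n : ℝ) ^ (-a) * Real.log (x / n) ^ b else 0) =
      (-1) ^ b * ∑' n : ℕ, if x < n then tailWeight a b x n * Λ n ^ 2 else 0 := by
    rw [← tsum_mul_left]
    refine tsum_congr fun n => ?_
    rw [mul_ite, mul_zero, tailWeight, ← inv_div, Real.log_inv, neg_pow]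
    ring_nf
  calc _ = ‖(-1) ^ b * (∑' n : ℕ, (if x < n then tailWeight a b x n * Λ n ^ 2 else 0) -
        b.factorial / (a - 1) ^ (b + 1) * x ^ (1 - a) * Real.log x)‖ := by rw [hsign]; ring_nf
    _ ≤ K * x ^ (1 - a) := by simpa using hK x hx
    _ = _ := by rw [Real.norm_of_nonneg (by positivity)]; field_simp
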